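/- arXiv:2507.23075 — 2 statements merged into one kernel-verified Lean document; each statement's English description precedes it below -/
import Mathlib

section
/- Let D ≥ 0 be an integer and assume the induction hypothesis H(D): for every m ≥ 1 and all natural numbers p_1, …, p_m, q_1, …, q_m with Σ_k (p_k + q_k) ≤ D, the product Π_{k=1}^m tr(A^{p_k} B^{q_k}) agrees at every point of Ŝ_n with some element of Lie(ℱ). Then for every l ≥ 1, every m ≥ 0, all integers i_1, …, i_l ≥ 2 and all natural numbers p_1, …, p_m, q_1, …, q_m with Σ_a i_a + Σ_b (p_b + q_b) ≤ D + 4, the product (Π_{a=1}^l tr(A^{i_a})) · Π_{b=1}^m tr(A^{p_b} B^{q_b}) agrees at every point of Ŝ_n with some element of Lie(ℱ). -/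
open MvPolynomial Matrix

/-- Polynomial functions on `M_n(ℂ) × M_n(ℂ)`, represented as polynomials in the
entries of the two matrices. -/
abbrev PolyFun (n : ℕ) := MvPolynomial ((Fin n × Fin n) ⊕ (Fin n × Fin n)) ℂ

/-- The matrix of coordinate functions `X_{jk}`. -/
noncomputable def Xmat (n : ℕ) : Matrix (Fin n) (Fin n) (PolyFun n) :=
  fun i j => MvPolynomial.X (Sum.inl (i, j))

/-- The matrix of coordinate functions `Y_{jk}`. -/
noncomputable def Ymat (n : ℕ) : Matrix (Fin n) (Fin n) (PolyFun n) :=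
  fun i j => MvPolynomial.X (Sum.inr (i, j))

/-- Traceless part `A = X - (tr X / n) I_n`. -/
noncomputable def Amat (n : ℕ) : Matrix (Fin n) (Fin n) (PolyFun n) :=
  Xmat n - (MvPolynomial.C ((n : ℂ)⁻¹) * Matrix.trace (Xmat n)) • (1 : Matrix (Fin n) (Fin n) (PolyFun n))

/-- Traceless part `B = Y - (tr Y / n) I_n`. -/
noncomputable def Bmat (n : ℕ) : Matrix (Fin n) (Fin n) (PolyFun n) :=
  Ymat n - (MvPolynomial.C ((n : ℂ)⁻¹) * Matrix.trace (Ymat n)) • (1 : Matrix (Fin n) (Fin n) (PolyFun n))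

/-- The polynomial function `(X,Y) ↦ tr (A^p B^q)`. -/
noncomputable def trAB (n p q : ℕ) : PolyFun n :=
  Matrix.trace (Amat n ^ p * Bmat n ^ q)

/-- The polynomial function `(X,Y) ↦ tr (X^a Y^b)`. -/
noncomputable def trXY (n a b : ℕ) : PolyFun n :=
  Matrix.trace (Xmat n ^ a * Ymat n ^ b)

/-- The Poisson bracket
`{F,G} = Σ_{j,k} ∂F/∂X_{jk} ∂G/∂Y_{kj} − ∂F/∂Y_{jk} ∂G/∂X_{kj}`. -/
noncomputable def pbracket {n : ℕ} (F G : PolyFun n) : PolyFun n :=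
  ∑ j : Fin n, ∑ k : Fin n,
    (MvPolynomial.pderiv (Sum.inl (j, k)) F * MvPolynomial.pderiv (Sum.inr (k, j)) G
      - MvPolynomial.pderiv (Sum.inr (j, k)) F * MvPolynomial.pderiv (Sum.inl (k, j)) G)

/-- Evaluation of a polynomial function at a pair of matrices. -/
noncomputable def evalP {n : ℕ} (X Y : Matrix (Fin n) (Fin n) ℂ) (F : PolyFun n) : ℂ :=
  MvPolynomial.eval (Sum.elim (fun p => X p.1 p.2) (fun p => Y p.1 p.2)) F

/-- The Calogero–Moser variety `Ĉ_n = {(X,Y) : rank([X,Y] − i I_n) = 1}`. -/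
def Chat (n : ℕ) : Set (Matrix (Fin n) (Fin n) ℂ × Matrix (Fin n) (Fin n) ℂ) :=
  {P | ((P.1 * P.2 - P.2 * P.1) - Complex.I • (1 : Matrix (Fin n) (Fin n) ℂ)).rank = 1}

/-- The traceless Calogero–Moser variety
`Ŝ_n = {(X,Y) : tr X = tr Y = 0, rank([X,Y] − i I_n) = 1}`. -/
def Shat (n : ℕ) : Set (Matrix (Fin n) (Fin n) ℂ × Matrix (Fin n) (Fin n) ℂ) :=
  {P | Matrix.trace P.1 = 0 ∧ Matrix.trace P.2 = 0 ∧
    ((P.1 * P.2 - P.2 * P.1) - Complex.I • (1 : Matrix (Fin n) (Fin n) ℂ)).rank = 1}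

/-- The set `ℱ = {tr A², tr B², tr A³, (tr AB)²}`. -/
noncomputable def calF (n : ℕ) : Set (PolyFun n) :=
  {trAB n 2 0, trAB n 0 2, trAB n 3 0, (trAB n 1 1) ^ 2}

/-- The smallest ℂ-linear subspace of the polynomial functions containing `S`
and closed under the Poisson bracket. -/
inductive LieGen (n : ℕ) (S : Set (PolyFun n)) : PolyFun n → Prop
  | base {f : PolyFun n} : f ∈ S → LieGen n S f
  | zero : LieGen n S 0
  | add {f g : PolyFun n} : LieGen n S f → LieGen n S g → LieGen n S (f + g)
  | smul (c : ℂ) {f : PolyFun n} : LieGen n S f → LieGen n S (c • f)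
  | bracket {f g : PolyFun n} : LieGen n S f → LieGen n S g → LieGen n S (pbracket f g)

namespace CalogeroMoser

variable {n : ℕ}

/-! ### The Poisson bracket -/

/-- The Hamiltonian derivation `G ↦ {F, G}`. -/
noncomputable def ham (F : PolyFun n) : Derivation ℂ (PolyFun n) (PolyFun n) :=
  ∑ j : Fin n, ∑ k : Fin n,
    (pderiv (Sum.inl (j, k)) F • pderiv (Sum.inr (k, j))
      - pderiv (Sum.inr (j, k)) F • pderiv (Sum.inl (k, j)))

theorem ham_apply (F G : PolyFun n) : ham F G = pbracket F G := by
  have sum_apply : ∀ (f : Fin n → Derivation ℂ (PolyFun n) (PolyFun n)),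
      (∑ j, f j) G = ∑ j, f j G := fun f =>
    map_sum ({ toFun := fun d => d G, map_zero' := rfl, map_add' := fun _ _ => rfl } :
      Derivation ℂ (PolyFun n) (PolyFun n) →+ PolyFun n) f Finset.univ
  simp only [ham, pbracket, sum_apply, Derivation.sub_apply, Derivation.smul_apply, smul_eq_mul]

theorem pbracket_antisymm (F G : PolyFun n) : pbracket F G = -pbracket G F := by
  unfold pbracket
  rw [Finset.sum_comm, ← Finset.sum_neg_distrib]
  refine Finset.sum_congr rfl fun j _ => ?_
  rw [← Finset.sum_neg_distrib]
  refine Finset.sum_congr rfl fun k _ => ?_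
  ring

theorem ham_antisymm (F G : PolyFun n) : ham F G = -ham G F := by
  rw [ham_apply, ham_apply, pbracket_antisymm]

theorem ham_inl (F : PolyFun n) (j k : Fin n) :
    ham F (X (Sum.inl (j, k))) = -pderiv (Sum.inr (k, j)) F := by
  rw [ham_apply]
  simp only [pbracket, pderiv_X, Pi.single_apply, Sum.inl.injEq, Prod.mk.injEq, reduceCtorEq,
    if_false, mul_zero, zero_sub, Finset.sum_neg_distrib]
  rw [Finset.sum_eq_single k, Finset.sum_eq_single j] <;> simp +contextual [eq_comm]

theorem ham_inr (F : PolyFun n) (j k : Fin n) :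
    ham F (X (Sum.inr (j, k))) = pderiv (Sum.inl (k, j)) F := by
  rw [ham_apply]
  simp only [pbracket, pderiv_X, Pi.single_apply, Sum.inr.injEq, Prod.mk.injEq, reduceCtorEq,
    if_false, mul_zero, sub_zero]
  rw [Finset.sum_eq_single k, Finset.sum_eq_single j] <;> simp +contextual [eq_comm]

theorem pderiv_comm {σ : Type*} (i j : σ) (f : MvPolynomial σ ℂ) :
    pderiv i (pderiv j f) = pderiv j (pderiv i f) := by
  classical
  have h : ⁅(pderiv i : Derivation ℂ (MvPolynomial σ ℂ) (MvPolynomial σ ℂ)),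
      (pderiv j : Derivation ℂ (MvPolynomial σ ℂ) (MvPolynomial σ ℂ))⁆ = 0 := by
    refine MvPolynomial.derivation_ext fun k => ?_
    rw [Derivation.commutator_apply]
    simp only [pderiv_X, Pi.single_apply]
    split_ifs <;> simp
  have := DFunLike.congr_fun h f
  simpa [Derivation.commutator_apply, sub_eq_zero] using this

theorem pderiv_ham (v : (Fin n × Fin n) ⊕ (Fin n × Fin n)) (F G : PolyFun n) :
    pderiv v (ham F G) = ham (pderiv v F) G + ham F (pderiv v G) := by
  simp only [ham_apply, pbracket, map_sum, map_sub, Derivation.leibniz, smul_eq_mul,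
    ← Finset.sum_add_distrib]
  refine Finset.sum_congr rfl fun j _ => Finset.sum_congr rfl fun k _ => ?_
  simp only [pderiv_comm v (Sum.inl _), pderiv_comm v (Sum.inr _)]
  ring

/-- The Jacobi identity. -/
theorem ham_ham (F G : PolyFun n) : ham (ham F G) = ⁅ham F, ham G⁆ := by
  refine MvPolynomial.derivation_ext fun v => ?_
  rw [Derivation.commutator_apply]
  rcases v with ⟨j, k⟩ | ⟨j, k⟩
  · rw [ham_inl, ham_inl, ham_inl, pderiv_ham, map_neg, map_neg,
      ham_antisymm (pderiv (Sum.inr (k, j)) F)]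
    ring
  · rw [ham_inr, ham_inr, ham_inr, pderiv_ham, ham_antisymm (pderiv (Sum.inl (k, j)) F)]
    ring

theorem ham_ham_apply (F G K : PolyFun n) :
    ham (ham F G) K = ham F (ham G K) - ham G (ham F K) := by
  rw [ham_ham, Derivation.commutator_apply]

theorem ham_add (F G : PolyFun n) : ham (F + G) = ham F + ham G := by
  ext1 v
  simp only [Derivation.add_apply, ham_antisymm _ (X v), map_add]
  ring

theorem ham_smul (c : ℂ) (F : PolyFun n) : ham (c • F) = c • ham F := by
  ext1 v
  simp only [Derivation.smul_apply, ham_antisymm _ (X v), Derivation.map_smul, smul_neg]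

theorem ham_mul_apply (F G K : PolyFun n) : ham (F * G) K = F * ham G K + G * ham F K := by
  rw [ham_antisymm, Derivation.leibniz, ham_antisymm K, ham_antisymm K, smul_eq_mul, smul_eq_mul]
  ring

/-! ### Invariant functions and the rank one ideal -/

/-- The moment map `[A, B] - i`, which agrees with `[X, Y] - i`. -/
noncomputable def Theta (n : ℕ) : Matrix (Fin n) (Fin n) (PolyFun n) :=
  Amat n * Bmat n - Bmat n * Amat n - (C Complex.I : PolyFun n) • 1

/-- The ideal generated by the `2 × 2` minors of `Theta`. -/
noncomputable def minorIdeal (n : ℕ) : Ideal (PolyFun n) :=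
  Ideal.span (Set.range fun t : (Fin n × Fin n) × (Fin n × Fin n) =>
    Theta n t.1.1 t.1.2 * Theta n t.2.1 t.2.2 - Theta n t.1.1 t.2.2 * Theta n t.2.1 t.1.2)

/-- A function is invariant if it Poisson commutes with all entries of `Theta`. -/
def Inv (f : PolyFun n) : Prop := ∀ a b, ham f (Theta n a b) = 0

theorem Inv.zero : Inv (0 : PolyFun n) := fun a b => by
  rw [ham_antisymm, map_zero, neg_zero]

theorem Inv.add {f g : PolyFun n} (hf : Inv f) (hg : Inv g) : Inv (f + g) := fun a b => by
  rw [ham_add, Derivation.add_apply, hf, hg, add_zero]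

theorem Inv.smul {f : PolyFun n} (c : ℂ) (hf : Inv f) : Inv (c • f) := fun a b => by
  rw [ham_smul, Derivation.smul_apply, hf, smul_zero]

theorem Inv.pow {f : PolyFun n} (hf : Inv f) (k : ℕ) : Inv (f ^ k) := fun a b => by
  rw [ham_antisymm, Derivation.leibniz_pow, ham_antisymm _ f, hf]
  simp

theorem Inv.ham {f g : PolyFun n} (hf : Inv f) (hg : Inv g) : Inv (ham f g) := fun a b => by
  rw [ham_ham_apply, hf, hg, map_zero, map_zero, sub_zero]

theorem Inv.ham_mem {f j : PolyFun n} (hf : Inv f) (hj : j ∈ minorIdeal n) :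
    CalogeroMoser.ham f j ∈ minorIdeal n := by
  induction hj using Submodule.span_induction with
  | mem x hx =>
    obtain ⟨t, rfl⟩ := hx
    simp [hf _ _]
  | zero => simp
  | add x y _ _ hx hy => rw [map_add]; exact add_mem hx hy
  | smul a x hx hx' =>
    rw [smul_eq_mul, Derivation.leibniz, smul_eq_mul, smul_eq_mul]
    exact add_mem (Ideal.mul_mem_left _ _ hx') (Ideal.mul_mem_right _ _ hx)

/-! ### Derivations acting on matrices -/

section Derivation

variable {R : Type*} [CommRing R] [Algebra ℂ R] (δ : Derivation ℂ R R)

theorem map_mul_derivation (M N : Matrix (Fin n) (Fin n) R) :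
    (M * N).map δ = M.map δ * N + M * N.map δ := by
  ext a b
  simp only [Matrix.map_apply, Matrix.mul_apply, Matrix.add_apply, map_sum, Derivation.leibniz,
    smul_eq_mul, ← Finset.sum_add_distrib]
  exact Finset.sum_congr rfl fun _ _ => by ring

theorem map_one_derivation : (1 : Matrix (Fin n) (Fin n) R).map δ = 0 := by
  ext a b
  by_cases h : a = b <;> simp [h]

theorem map_sub_derivation (M N : Matrix (Fin n) (Fin n) R) :
    (M - N).map δ = M.map δ - N.map δ := by
  ext a b; simp

theorem map_smul_one_derivation (r : R) :
    (r • (1 : Matrix (Fin n) (Fin n) R)).map δ = δ r • 1 := by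
  ext a b
  by_cases h : a = b <;> simp [h]

theorem derivation_trace (M : Matrix (Fin n) (Fin n) R) : δ M.trace = (M.map δ).trace := by
  simp [Matrix.trace, map_sum]

theorem map_pow_derivation (M : Matrix (Fin n) (Fin n) R) (p : ℕ) :
    (M ^ p).map δ = ∑ i ∈ Finset.range p, M ^ i * M.map δ * M ^ (p - 1 - i) := by
  induction p with
  | zero => simp [map_one_derivation]
  | succ p ih =>
    rw [pow_succ, map_mul_derivation, ih, Finset.sum_range_succ, Finset.sum_mul]
    congr 1
    · refine Finset.sum_congr rfl fun i hi => ?_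
      rw [Finset.mem_range] at hi
      rw [mul_assoc, ← pow_succ]
      congr 2
      omega
    · simp

theorem map_pow_derivation_eq_zero {M : Matrix (Fin n) (Fin n) R}
    (h : M.map δ = 0) (p : ℕ) : (M ^ p).map δ = 0 := by
  rw [map_pow_derivation, h]; simp

theorem derivation_trace_pow (M : Matrix (Fin n) (Fin n) R) (p : ℕ) :
    δ (M ^ p).trace = p * (M ^ (p - 1) * M.map δ).trace := by
  rw [derivation_trace, map_pow_derivation, Matrix.trace_sum]
  rw [Finset.sum_congr rfl (g := fun _ => (M ^ (p - 1) * M.map δ).trace)]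
  · simp
  · intro i hi
    rw [Finset.mem_range] at hi
    rw [Matrix.trace_mul_comm, ← mul_assoc, ← pow_add]
    congr 3
    omega

end Derivation

/-! ### The Hamiltonian flows of `tr A ^ p` and `tr B ^ 2` -/

theorem C_inv_mul_natCast (hn : 1 ≤ n) : (C (n : ℂ)⁻¹ : PolyFun n) * (n : PolyFun n) = 1 := by
  have : (n : PolyFun n) = C (n : ℂ) := by simp
  rw [this, ← C_mul, inv_mul_cancel₀ (by exact_mod_cast (by omega : n ≠ 0)), C_1]

theorem trace_traceless (hn : 1 ≤ n) (M : Matrix (Fin n) (Fin n) (PolyFun n)) :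
    (M - (C ((n : ℂ)⁻¹) * M.trace) • (1 : Matrix (Fin n) (Fin n) (PolyFun n))).trace = 0 := by
  rw [Matrix.trace_sub, Matrix.trace_smul, Matrix.trace_one, Fintype.card_fin, smul_eq_mul]
  linear_combination (-M.trace) * C_inv_mul_natCast hn

theorem trace_Amat (hn : 1 ≤ n) : (Amat n).trace = 0 := trace_traceless hn _

theorem trace_Bmat (hn : 1 ≤ n) : (Bmat n).trace = 0 := trace_traceless hn _

theorem derivation_map_Amat (δ : Derivation ℂ (PolyFun n) (PolyFun n)) :
    (Amat n).map δ = (Xmat n).map δ - (C (n : ℂ)⁻¹ * ((Xmat n).map δ).trace) • 1 := by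
  rw [Amat, map_sub_derivation, map_smul_one_derivation, Derivation.leibniz, derivation_trace]
  simp

theorem derivation_map_Bmat (δ : Derivation ℂ (PolyFun n) (PolyFun n)) :
    (Bmat n).map δ = (Ymat n).map δ - (C (n : ℂ)⁻¹ * ((Ymat n).map δ).trace) • 1 := by
  rw [Bmat, map_sub_derivation, map_smul_one_derivation, Derivation.leibniz, derivation_trace]
  simp

theorem Xmat_map_ham_inl (j k : Fin n) : (Xmat n).map (ham (X (Sum.inl (j, k)))) = 0 := by
  ext1 a b
  simp [Xmat, ham_inl]

theorem Ymat_map_ham_inr (j k : Fin n) : (Ymat n).map (ham (X (Sum.inr (j, k)))) = 0 := by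
  ext1 a b
  simp [Ymat, ham_inr]

theorem Xmat_map_ham_inr (j k : Fin n) :
    (Xmat n).map (ham (X (Sum.inr (j, k)))) = -Matrix.single k j 1 := by
  ext1 a b
  simp [Xmat, ham_inl, pderiv_X, Pi.single_apply, Matrix.single_apply, and_comm]

theorem Ymat_map_ham_inl (j k : Fin n) :
    (Ymat n).map (ham (X (Sum.inl (j, k)))) = Matrix.single k j 1 := by
  ext1 a b
  simp [Ymat, ham_inr, pderiv_X, Pi.single_apply, Matrix.single_apply, and_comm]

theorem Xmat_map_ham_trace_Amat_pow (p : ℕ) : (Xmat n).map (ham ((Amat n ^ p).trace)) = 0 := by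
  ext1 j k
  rw [Matrix.map_apply, Xmat, ham_antisymm, derivation_trace_pow, derivation_map_Amat,
    Xmat_map_ham_inl]
  simp

theorem Ymat_map_ham_trace_Amat_pow (p : ℕ) : (Ymat n).map (ham ((Amat n ^ p).trace)) =
    (p : PolyFun n) • (Amat n ^ (p - 1) - (C (n : ℂ)⁻¹ * (Amat n ^ (p - 1)).trace) • 1) := by
  ext1 j k
  rw [Matrix.map_apply, Ymat, ham_antisymm, derivation_trace_pow, derivation_map_Amat,
    Xmat_map_ham_inr, mul_sub, Matrix.trace_sub, mul_neg, Matrix.trace_neg]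
  simp only [Matrix.trace_mul_single, Matrix.trace_neg, mul_smul, Matrix.trace_smul, mul_one,
    Matrix.mul_smul, Matrix.smul_apply, Matrix.sub_apply, smul_eq_mul, Matrix.one_apply]
  by_cases h : j = k
  · subst h
    simp
    ring
  · simp [h, Matrix.trace_single_eq_of_ne, Ne.symm h]

theorem Ymat_map_ham_trace_Bmat_sq : (Ymat n).map (ham ((Bmat n ^ 2).trace)) = 0 := by
  ext1 j k
  rw [Matrix.map_apply, Ymat, ham_antisymm, derivation_trace_pow, derivation_map_Bmat,
    Ymat_map_ham_inr]
  simp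

theorem Xmat_map_ham_trace_Bmat_sq (hn : 1 ≤ n) : (Xmat n).map (ham ((Bmat n ^ 2).trace)) =
    (-2 : PolyFun n) • Bmat n := by
  ext1 j k
  rw [Matrix.map_apply, Xmat, ham_antisymm, derivation_trace_pow, derivation_map_Bmat,
    Ymat_map_ham_inl, mul_sub, Matrix.trace_sub]
  simp [Matrix.trace_mul_single, trace_Bmat hn]

theorem Amat_map_ham_trace_Amat_pow (p : ℕ) : (Amat n).map (ham ((Amat n ^ p).trace)) = 0 := by
  rw [derivation_map_Amat, Xmat_map_ham_trace_Amat_pow]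
  simp

theorem Bmat_map_ham_trace_Amat_pow (hn : 1 ≤ n) (p : ℕ) :
    (Bmat n).map (ham ((Amat n ^ p).trace)) =
    (p : PolyFun n) • (Amat n ^ (p - 1) - (C (n : ℂ)⁻¹ * (Amat n ^ (p - 1)).trace) • 1) := by
  rw [derivation_map_Bmat, Ymat_map_ham_trace_Amat_pow, Matrix.trace_smul, trace_traceless hn]
  simp

theorem Bmat_map_ham_trace_Bmat_sq : (Bmat n).map (ham ((Bmat n ^ 2).trace)) = 0 := by
  rw [derivation_map_Bmat, Ymat_map_ham_trace_Bmat_sq]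
  simp

theorem Amat_map_ham_trace_Bmat_sq (hn : 1 ≤ n) :
    (Amat n).map (ham ((Bmat n ^ 2).trace)) = (-2 : PolyFun n) • Bmat n := by
  rw [derivation_map_Amat, Xmat_map_ham_trace_Bmat_sq hn, Matrix.trace_smul, trace_Bmat hn]
  simp

theorem Theta_map_derivation (δ : Derivation ℂ (PolyFun n) (PolyFun n)) :
    (Theta n).map δ = (Amat n).map δ * Bmat n + Amat n * (Bmat n).map δ
      - ((Bmat n).map δ * Amat n + Bmat n * (Amat n).map δ) := by
  rw [Theta, map_sub_derivation, map_sub_derivation, map_mul_derivation, map_mul_derivation,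
    map_smul_one_derivation]
  simp

theorem inv_of_Theta_map_eq_zero {f : PolyFun n} (h : (Theta n).map (ham f) = 0) : Inv f :=
  fun a b => congrFun (congrFun h a) b

theorem trAB_right_zero (p : ℕ) : trAB n p 0 = (Amat n ^ p).trace := by simp [trAB]

theorem trAB_left_zero (q : ℕ) : trAB n 0 q = (Bmat n ^ q).trace := by simp [trAB]

theorem inv_trAB_right_zero (hn : 1 ≤ n) (p : ℕ) : Inv (trAB n p 0) := by
  apply inv_of_Theta_map_eq_zero
  rw [trAB_right_zero, Theta_map_derivation, Amat_map_ham_trace_Amat_pow,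
    Bmat_map_ham_trace_Amat_pow hn]
  simp [mul_sub, sub_mul, ← pow_succ, ← pow_succ']

theorem inv_trAB_zero_two (hn : 1 ≤ n) : Inv (trAB n 0 2) := by
  apply inv_of_Theta_map_eq_zero
  rw [trAB_left_zero, Theta_map_derivation, Bmat_map_ham_trace_Bmat_sq,
    Amat_map_ham_trace_Bmat_sq hn]
  simp

/-- `δ (tr A ^ r B ^ s)` for the flow of `tr A ^ p`. -/
theorem ham_trAB_right_zero (hn : 1 ≤ n) (p r s : ℕ) :
    ham (trAB n p 0) (trAB n r s) = (p : PolyFun n) * ((∑ i ∈ Finset.range s,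
      (Amat n ^ r * Bmat n ^ i * Amat n ^ (p - 1) * Bmat n ^ (s - 1 - i)).trace)
      - (C (n : ℂ)⁻¹ : PolyFun n) * (s : PolyFun n) * trAB n (p - 1) 0 * trAB n r (s - 1)) := by
  rw [trAB_right_zero, trAB, derivation_trace, map_mul_derivation,
    map_pow_derivation_eq_zero _ (Amat_map_ham_trace_Amat_pow p), zero_mul, zero_add,
    map_pow_derivation, Bmat_map_ham_trace_Amat_pow hn, Finset.mul_sum, Matrix.trace_sum,
    trAB_right_zero]
  have key : ∀ i ∈ Finset.range s, (Amat n ^ r * (Bmat n ^ i * ((p : PolyFun n) •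
      (Amat n ^ (p - 1) - (C (n : ℂ)⁻¹ * (Amat n ^ (p - 1)).trace) • 1))
        * Bmat n ^ (s - 1 - i))).trace =
      (p : PolyFun n) * (Amat n ^ r * Bmat n ^ i * Amat n ^ (p - 1) * Bmat n ^ (s - 1 - i)).trace
      - (p : PolyFun n) * (C (n : ℂ)⁻¹ * (Amat n ^ (p - 1)).trace * trAB n r (s - 1)) := by
    intro i hi
    rw [Finset.mem_range] at hi
    have : Bmat n ^ (s - 1) = Bmat n ^ i * Bmat n ^ (s - 1 - i) := by
      rw [← pow_add]; congr 1; omega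
    rw [trAB, this]
    simp only [Matrix.mul_smul, Matrix.smul_mul, Matrix.trace_smul, mul_sub, sub_mul,
      Matrix.trace_sub, smul_eq_mul, mul_one, mul_assoc]
  rw [Finset.sum_congr rfl key, Finset.sum_sub_distrib, ← Finset.mul_sum, Finset.sum_const,
    Finset.card_range, nsmul_eq_mul]
  ring

/-- `δ (tr A ^ r B ^ s)` for the flow of `tr B ^ 2`. -/
theorem ham_trAB_zero_two (hn : 1 ≤ n) (r s : ℕ) :
    ham (trAB n 0 2) (trAB n r s) = -2 * ∑ i ∈ Finset.range r,
      (Amat n ^ i * Bmat n * Amat n ^ (r - 1 - i) * Bmat n ^ s).trace := by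
  rw [trAB_left_zero, trAB, derivation_trace, map_mul_derivation,
    map_pow_derivation_eq_zero _ Bmat_map_ham_trace_Bmat_sq, mul_zero, add_zero,
    map_pow_derivation, Amat_map_ham_trace_Bmat_sq hn, Finset.sum_mul, Matrix.trace_sum,
    Finset.mul_sum]
  simp only [Matrix.mul_smul, Matrix.smul_mul, Matrix.trace_smul, smul_eq_mul]

theorem ham_two_zero_one_one (hn : 1 ≤ n) :
    ham (trAB n 2 0) (trAB n 1 1) = 2 * trAB n 2 0 := by
  rw [ham_trAB_right_zero hn]
  simp [trAB, trace_Amat hn, pow_two]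

theorem ham_two_zero_zero_two (hn : 1 ≤ n) :
    ham (trAB n 2 0) (trAB n 0 2) = 4 * trAB n 1 1 := by
  rw [ham_trAB_right_zero hn]
  simp [trAB, trace_Amat hn, Finset.sum_range_succ, Matrix.trace_mul_comm (Bmat n)]
  ring

/-! ### The degree filtration on products of traces -/

/-- The product of the traces `tr A ^ p B ^ q` over a list of exponents. -/
noncomputable def trProd (n : ℕ) (s : List (ℕ × ℕ)) : PolyFun n :=
  (s.map fun t => trAB n t.1 t.2).prod

@[simp] theorem trProd_nil : trProd n [] = 1 := rfl

@[simp] theorem trProd_cons (t : ℕ × ℕ) (s : List (ℕ × ℕ)) :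
    trProd n (t :: s) = trAB n t.1 t.2 * trProd n s := by simp [trProd]

theorem trProd_append (s t : List (ℕ × ℕ)) :
    trProd n (s ++ t) = trProd n s * trProd n t := by simp [trProd]

/-- The total degree of a list of exponents. -/
def deg (s : List (ℕ × ℕ)) : ℕ := (s.map fun t => t.1 + t.2).sum

@[simp] theorem deg_nil : deg [] = 0 := rfl

@[simp] theorem deg_cons (t : ℕ × ℕ) (s : List (ℕ × ℕ)) :
    deg (t :: s) = t.1 + t.2 + deg s := by simp [deg]

theorem deg_append (s t : List (ℕ × ℕ)) : deg (s ++ t) = deg s + deg t := by simp [deg]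

/-- All factors have degree at least two. -/
def Reduced (s : List (ℕ × ℕ)) : Prop := ∀ t ∈ s, 2 ≤ t.1 + t.2

theorem reduced_nil : Reduced [] := by simp [Reduced]

theorem reduced_cons {t : ℕ × ℕ} {s : List (ℕ × ℕ)} :
    Reduced (t :: s) ↔ 2 ≤ t.1 + t.2 ∧ Reduced s := by simp [Reduced]

/-- Combinations of reduced products of degree at most `d`, modulo the rank one ideal. -/
noncomputable def filt (n d : ℕ) : Submodule ℂ (PolyFun n) :=
  Submodule.span ℂ {f | ∃ s, Reduced s ∧ deg s ≤ d ∧ trProd n s = f} ⊔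
    (minorIdeal n).restrictScalars ℂ

theorem minorIdeal_le_filt (d : ℕ) : (minorIdeal n).restrictScalars ℂ ≤ filt n d := le_sup_right

theorem trProd_mem_filt {s : List (ℕ × ℕ)} (hs : Reduced s) {d : ℕ} (hd : deg s ≤ d) :
    trProd n s ∈ filt n d :=
  Submodule.mem_sup_left (Submodule.subset_span ⟨s, hs, hd, rfl⟩)

theorem filt_le {d : ℕ} {S : Submodule ℂ (PolyFun n)}
    (hJ : (minorIdeal n).restrictScalars ℂ ≤ S)
    (hS : ∀ s, Reduced s → deg s ≤ d → trProd n s ∈ S) : filt n d ≤ S := by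
  refine sup_le (Submodule.span_le.mpr ?_) hJ
  rintro _ ⟨s, h1, h2, rfl⟩
  exact hS s h1 h2

theorem filt_mono {d e : ℕ} (h : d ≤ e) : filt n d ≤ filt n e :=
  filt_le (minorIdeal_le_filt e) fun _ h1 h2 => trProd_mem_filt h1 (h2.trans h)

theorem mul_mem_filt {a b : ℕ} {f g : PolyFun n} (hf : f ∈ filt n a) (hg : g ∈ filt n b) :
    f * g ∈ filt n (a + b) := by
  suffices h : filt n a ≤ (filt n (a + b)).comap (LinearMap.mulRight ℂ g) from h hf
  refine filt_le (fun j hj => minorIdeal_le_filt _ (Ideal.mul_mem_right g _ hj)) fun s hs ds => ?_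
  suffices h : filt n b ≤ (filt n (a + b)).comap (LinearMap.mulLeft ℂ (trProd n s)) from h hg
  refine filt_le (fun j hj => minorIdeal_le_filt _ (Ideal.mul_mem_left _ _ hj)) fun t ht dt => ?_
  rw [Submodule.mem_comap, LinearMap.mulLeft_apply, ← trProd_append]
  refine trProd_mem_filt (fun x hx => ?_) (by rw [deg_append]; omega)
  rcases List.mem_append.mp hx with h | h
  exacts [hs x h, ht x h]

theorem one_mem_filt (d : ℕ) : (1 : PolyFun n) ∈ filt n d :=
  trProd_mem_filt (s := []) reduced_nil (by simp)

theorem trAB_zero_zero : trAB n 0 0 = (n : ℂ) • (1 : PolyFun n) := by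
  simp [trAB, MvPolynomial.smul_eq_C_mul]

theorem trAB_eq_zero (hn : 1 ≤ n) {p q : ℕ} (h : p + q = 1) : trAB n p q = 0 := by
  obtain ⟨rfl, rfl⟩ | ⟨rfl, rfl⟩ : (p = 1 ∧ q = 0) ∨ (p = 0 ∧ q = 1) := by omega
  · simp [trAB, trace_Amat hn]
  · simp [trAB, trace_Bmat hn]

theorem trAB_mem_filt (hn : 1 ≤ n) (p q : ℕ) : trAB n p q ∈ filt n (p + q) := by
  rcases Nat.lt_trichotomy (p + q) 1 with h | h | h
  · obtain ⟨rfl, rfl⟩ : p = 0 ∧ q = 0 := by omega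
    rw [trAB_zero_zero]
    exact Submodule.smul_mem _ _ (one_mem_filt _)
  · rw [trAB_eq_zero hn h]; exact zero_mem _
  · have : trAB n p q = trProd n [(p, q)] := by simp
    rw [this]
    exact trProd_mem_filt (by simpa [Reduced] using Nat.succ_le_of_lt h) (by simp)

/-! ### Reordering words in `A` and `B` -/

/-- The product of a word in `A` (`true`) and `B` (`false`). -/
noncomputable def word (n : ℕ) (w : List Bool) : Matrix (Fin n) (Fin n) (PolyFun n) :=
  (w.map fun b => bif b then Amat n else Bmat n).prod

theorem word_append (u v : List Bool) : word n (u ++ v) = word n u * word n v := by simp [word]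

@[simp] theorem word_true_cons (v : List Bool) : word n (true :: v) = Amat n * word n v := by
  simp [word]

@[simp] theorem word_false_cons (v : List Bool) : word n (false :: v) = Bmat n * word n v := by
  simp [word]

@[simp] theorem word_replicate_true (k : ℕ) : word n (List.replicate k true) = Amat n ^ k := by
  simp [word]

@[simp] theorem word_replicate_false (k : ℕ) : word n (List.replicate k false) = Bmat n ^ k := by
  simp [word]

theorem perm_sorted (w : List Bool) :
    w.Perm (List.replicate (w.count true) true ++ List.replicate (w.count false) false) := by
  rw [List.perm_iff_count]
  rintro (_ | _) <;> simp [List.count_replicate]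

/-- If a function of words changes by an element of `S` under adjacent swaps, then it changes
by an element of `S` under permutations. -/
theorem sub_mem_of_perm {S : Submodule ℂ (PolyFun n)} {g : List Bool → PolyFun n} {d : ℕ}
    (hswap : ∀ u v : List Bool, u.length + v.length + 2 = d →
      g (u ++ true :: false :: v) - g (u ++ false :: true :: v) ∈ S)
    {w₁ w₂ : List Bool} (h : w₁.Perm w₂) :
    ∀ u : List Bool, u.length + w₁.length = d → g (u ++ w₁) - g (u ++ w₂) ∈ S := by
  induction h with
  | nil => simp
  | cons x _ ih =>
    intro u hu
    simpa using ih (u ++ [x]) (by simp at hu ⊢; omega)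
  | swap x y l =>
    intro u hu
    have hu' : u.length + l.length + 2 = d := by simpa [add_assoc] using hu
    cases x <;> cases y
    · simp
    · exact hswap u l hu'
    · rw [← neg_sub]; exact neg_mem (hswap u l hu')
    · simp
  | trans h₁ _ ih₁ ih₂ =>
    intro u hu
    have := add_mem (ih₁ u hu) (ih₂ u (by rw [← h₁.length_eq]; exact hu))
    simpa using this

theorem trace_mul_Theta_mul_Theta (U V : Matrix (Fin n) (Fin n) (PolyFun n)) :
    (U * Theta n * V * Theta n).trace - (U * Theta n).trace * (V * Theta n).trace
      ∈ minorIdeal n := by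
  have h₁ : (U * Theta n * V * Theta n).trace =
      ∑ a, ∑ d, ∑ c, ∑ b, U a b * V c d * (Theta n b c * Theta n d a) := by
    simp only [Matrix.trace, Matrix.diag, Matrix.mul_apply, Finset.sum_mul]
    refine Finset.sum_congr rfl fun a _ => Finset.sum_congr rfl fun d _ =>
      Finset.sum_congr rfl fun c _ => Finset.sum_congr rfl fun b _ => by ring
  have h₂ : (U * Theta n).trace * (V * Theta n).trace =
      ∑ a, ∑ d, ∑ c, ∑ b, U a b * V c d * (Theta n b a * Theta n d c) := by
    simp only [Matrix.trace, Matrix.diag, Matrix.mul_apply, Finset.sum_mul_sum]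
    refine Finset.sum_congr rfl fun a _ => ?_
    conv_rhs => rw [Finset.sum_comm]
    refine Finset.sum_congr rfl fun c _ => ?_
    rw [Finset.sum_comm]
    exact Finset.sum_congr rfl fun d _ => Finset.sum_congr rfl fun b _ => by ring
  rw [h₁, h₂]
  simp only [← Finset.sum_sub_distrib]
  refine sum_mem fun a _ => sum_mem fun d _ => sum_mem fun c _ => sum_mem fun b _ => ?_
  rw [← mul_sub]
  exact Ideal.mul_mem_left _ _ (Ideal.subset_span ⟨((b, c), (d, a)), rfl⟩)

theorem Amat_mul_Bmat : Amat n * Bmat n =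
    Bmat n * Amat n + Theta n + (C Complex.I : PolyFun n) • 1 := by
  rw [Theta]; abel

theorem trace_word_swap (u v : List Bool) :
    (word n (u ++ true :: false :: v)).trace - (word n (u ++ false :: true :: v)).trace =
      (word n (v ++ u) * Theta n).trace + Complex.I • (word n (u ++ v)).trace := by
  have h : (word n (v ++ u) * Theta n).trace = (word n u * Theta n * word n v).trace := by
    rw [word_append, Matrix.trace_mul_comm (word n u * Theta n), mul_assoc]
  rw [h]
  simp only [word_append, word_true_cons, word_false_cons]
  rw [← mul_assoc (Amat n), Amat_mul_Bmat]
  simp only [add_mul, mul_add, Matrix.trace_add, Matrix.smul_mul, Matrix.mul_smul, one_mul,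
    Matrix.trace_smul, MvPolynomial.smul_eq_C_mul, smul_eq_mul, mul_assoc]
  ring

theorem trace_word_mul_Theta_swap (u v : List Bool) :
    (word n (u ++ true :: false :: v) * Theta n).trace
      - (word n (u ++ false :: true :: v) * Theta n).trace =
      (word n u * Theta n * word n v * Theta n).trace
        + Complex.I • (word n (u ++ v) * Theta n).trace := by
  simp only [word_append, word_true_cons, word_false_cons]
  rw [← mul_assoc (Amat n), Amat_mul_Bmat]
  simp only [add_mul, mul_add, Matrix.trace_add, Matrix.smul_mul, Matrix.mul_smul, one_mul,
    Matrix.trace_smul, MvPolynomial.smul_eq_C_mul, smul_eq_mul, mul_assoc]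
  ring

/-- Moving one `A` to the left through a power of `B`. -/
theorem trace_move_mem {S : Submodule ℂ (PolyFun n)} {p q : ℕ} {θ : PolyFun n}
    (hθ : ∀ k l, k + 1 + l = q →
      (Amat n ^ p * Bmat n ^ k * Theta n * Bmat n ^ (l + 1)).trace - θ ∈ S) :
    ∀ k l, k + l = q → (Amat n ^ p * Bmat n ^ k * Amat n * Bmat n ^ (l + 1)).trace
      - trAB n (p + 1) (q + 1) + (k : ℂ) • (θ + Complex.I • trAB n p q) ∈ S := by
  intro k
  induction k with
  | zero =>
    rintro l hl
    obtain rfl : l = q := by omega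
    simp [trAB, pow_succ (Amat n)]
  | succ k ih =>
    intro l hl
    have h₁ := ih (l + 1) (by omega)
    have h₂ := hθ k l hl
    convert sub_mem h₁ h₂ using 1
    have e : (Amat n ^ p * Bmat n ^ k * Amat n * Bmat n ^ (l + 1 + 1)).trace =
        (Amat n ^ p * Bmat n ^ (k + 1) * Amat n * Bmat n ^ (l + 1)).trace
        + (Amat n ^ p * Bmat n ^ k * Theta n * Bmat n ^ (l + 1)).trace
        + Complex.I • trAB n p q := by
      rw [pow_succ' _ (l + 1), mul_assoc (_ * _) (Amat n), ← mul_assoc (Amat n), Amat_mul_Bmat]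
      have e' : Bmat n ^ q = Bmat n ^ k * Bmat n ^ (l + 1) := by
        rw [← pow_add]; congr 1; omega
      rw [trAB, e', pow_succ _ k]
      simp only [add_mul, mul_add, Matrix.trace_add, Matrix.smul_mul, Matrix.mul_smul, one_mul,
        Matrix.trace_smul, MvPolynomial.smul_eq_C_mul, smul_eq_mul, mul_assoc]
    rw [e]
    push_cast
    module

theorem smul_trace_mul_Theta_mem {S : Submodule ℂ (PolyFun n)} {p q : ℕ}
    (hθ : ∀ k l, k + 1 + l = q → (Amat n ^ p * Bmat n ^ k * Theta n * Bmat n ^ (l + 1)).trace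
      - (Amat n ^ p * Bmat n ^ q * Theta n).trace ∈ S) :
    (Amat n ^ p * Bmat n ^ q * Theta n).trace + Complex.I • trAB n p q ∈ S := by
  have h₁ := trace_move_mem hθ q 0 (by omega)
  have e : (Amat n ^ p * Bmat n ^ q * Theta n).trace =
      (Amat n ^ p * Bmat n ^ q * Amat n * Bmat n ^ (0 + 1)).trace
      - trAB n (p + 1) (q + 1) - Complex.I • trAB n p q := by
    have e' : trAB n (p + 1) (q + 1) = (Amat n ^ p * Bmat n ^ q * (Bmat n * Amat n)).trace := by
      rw [trAB, pow_succ' (Amat n), mul_assoc, Matrix.trace_mul_comm, pow_succ]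
      simp only [mul_assoc]
    rw [e', Theta, trAB]
    simp [mul_sub, MvPolynomial.smul_eq_C_mul, mul_assoc]
  have h₂ : ((q : ℂ) + 1) • ((Amat n ^ p * Bmat n ^ q * Theta n).trace
      + Complex.I • trAB n p q) ∈ S := by
    rw [add_smul, one_smul, add_comm]
    nth_rewrite 1 [e]
    rwa [sub_add_cancel]
  have hq : ((q : ℂ) + 1) ≠ 0 := by exact_mod_cast Nat.succ_ne_zero q
  exact (Submodule.smul_mem_iff _ hq).mp h₂

/-- Words agree with their sorted form, and insertions of `Theta` lower the degree. -/
theorem word_mem_filt (hn : 1 ≤ n) (w : List Bool) :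
    (word n w).trace - trAB n (w.count true) (w.count false) ∈ filt n (w.length - 2) ∧
      (word n w * Theta n).trace ∈ filt n w.length := by
  induction hd : w.length using Nat.strong_induction_on generalizing w with
  | _ d ih =>
    have hlen : ∀ v : List Bool, v.count true + v.count false = v.length :=
      fun v => List.count_true_add_count_false v
    have ihw : ∀ v : List Bool, v.length + 2 ≤ d → (word n v).trace ∈ filt n (d - 2) := by
      intro v hv
      have h₁ := (ih v.length (by omega) v rfl).1
      have h₂ := trAB_mem_filt hn (v.count true) (v.count false)
      rw [hlen] at h₂
      simpa using add_mem (filt_mono (by omega) h₁) (filt_mono (by omega : _ ≤ d - 2) h₂)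
    have ihΘ : ∀ v : List Bool, v.length + 2 ≤ d →
        (word n v * Theta n).trace ∈ filt n (d - 2) := fun v hv =>
      filt_mono (by omega) (ih v.length (by omega) v rfl).2
    have perm : ∀ w₁ w₂ : List Bool, w₁.length = d → w₁.Perm w₂ →
        (word n w₁).trace - (word n w₂).trace ∈ filt n (d - 2) := fun w₁ w₂ h₁ h₂ =>
      sub_mem_of_perm (d := d) (g := fun w => (word n w).trace) (fun u v huv => by
        rw [trace_word_swap]
        exact add_mem (ihΘ _ (by simp; omega))
          (Submodule.smul_mem _ _ (ihw _ (by simp; omega)))) h₂ [] (by simpa using h₁)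
    have permΘ : ∀ w₁ w₂ : List Bool, w₁.length = d → w₁.Perm w₂ →
        (word n w₁ * Theta n).trace - (word n w₂ * Theta n).trace ∈ filt n (d - 2) :=
      fun w₁ w₂ h₁ h₂ =>
      sub_mem_of_perm (d := d) (g := fun w => (word n w * Theta n).trace) (fun u v huv => by
        rw [trace_word_mul_Theta_swap]
        refine add_mem ?_ (Submodule.smul_mem _ _ (ihΘ _ (by simp; omega)))
        have h := mul_mem_filt (ih u.length (by omega) u rfl).2 (ih v.length (by omega) v rfl).2
        have h' := minorIdeal_le_filt (d - 2) (trace_mul_Theta_mul_Theta (word n u) (word n v))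
        simpa using add_mem h' (filt_mono (by omega) h)) h₂ [] (by simpa using h₁)
    set p := w.count true with hp
    set q := w.count false with hq
    have hpq : p + q = d := by rw [hp, hq, hlen, hd]
    have hsort := perm_sorted w
    refine ⟨?_, ?_⟩
    · have := perm _ _ hd hsort
      rwa [word_append, word_replicate_true, word_replicate_false] at this
    · have h₀ := permΘ _ _ hd hsort
      rw [word_append, word_replicate_true, word_replicate_false, ← hp, ← hq] at h₀
      have h₁ := smul_trace_mul_Theta_mem (S := filt n (d - 2)) (p := p) (q := q) (by
        intro k l hkl
        have := permΘ (List.replicate (l + 1) false ++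
          (List.replicate p true ++ List.replicate k false))
          (List.replicate p true ++ List.replicate q false) (by simp; omega) (by
            rw [List.perm_iff_count]
            rintro (_ | _) <;> simp [List.count_replicate] <;> omega)
        simp only [word_append, word_replicate_true, word_replicate_false] at this
        rwa [mul_assoc (Bmat n ^ (l + 1)), Matrix.trace_mul_comm (Bmat n ^ (l + 1))] at this)
      have h₂ : trAB n p q ∈ filt n d := hpq ▸ trAB_mem_filt hn p q
      have h₃ := sub_mem (filt_mono (Nat.sub_le d 2) (add_mem h₀ h₁))
        (Submodule.smul_mem _ Complex.I h₂)
      rwa [← add_assoc, sub_add_cancel, add_sub_cancel_right] at h₃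

theorem trace_word_sub_mem (hn : 1 ≤ n) {w : List Bool} {p q d : ℕ} (hp : w.count true = p)
    (hq : w.count false = q) (hd : p + q - 2 ≤ d) :
    (word n w).trace - trAB n p q ∈ filt n d := by
  have h := (word_mem_filt hn w).1
  rw [← List.count_true_add_count_false w, hp, hq] at h
  exact filt_mono hd h

/-- Leading term of `{tr A ^ p, tr A ^ r B ^ s}`. -/
theorem ham_trAB_right_zero_sub_mem (hn : 1 ≤ n) {p : ℕ} (hp : 1 ≤ p) (r s : ℕ) :
    ham (trAB n p 0) (trAB n r s) - ((p : ℂ) * s) • trAB n (p + r - 1) (s - 1)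
      + ((p : ℂ) * s * (n : ℂ)⁻¹) • (trAB n (p - 1) 0 * trAB n r (s - 1))
      ∈ filt n (p + r + s - 4) := by
  have h : ∑ i ∈ Finset.range s, ((Amat n ^ r * Bmat n ^ i * Amat n ^ (p - 1)
      * Bmat n ^ (s - 1 - i)).trace - trAB n (p + r - 1) (s - 1)) ∈ filt n (p + r + s - 4) := by
    refine sum_mem fun i hi => ?_
    rw [Finset.mem_range] at hi
    have := trace_word_sub_mem hn (w := List.replicate r true ++ List.replicate i false ++
      List.replicate (p - 1) true ++ List.replicate (s - 1 - i) false) (p := p + r - 1)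
      (q := s - 1) (d := p + r + s - 4) (by simp [List.count_replicate]; omega)
      (by simp [List.count_replicate]; omega) (by omega)
    simpa only [word_append, word_replicate_true, word_replicate_false] using this
  convert Submodule.smul_mem _ (p : ℂ) h using 1
  rw [ham_trAB_right_zero hn, Finset.sum_sub_distrib, Finset.sum_const, Finset.card_range]
  simp only [MvPolynomial.smul_eq_C_mul, C_mul, nsmul_eq_mul, map_natCast]
  ring

/-- Leading term of `{tr B ^ 2, tr A ^ r B ^ s}`. -/
theorem ham_trAB_zero_two_add_mem (hn : 1 ≤ n) (r s : ℕ) :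
    ham (trAB n 0 2) (trAB n r s) + (2 * (r : ℂ)) • trAB n (r - 1) (s + 1)
      ∈ filt n (r + s - 2) := by
  have h : ∑ i ∈ Finset.range r, ((Amat n ^ i * Bmat n * Amat n ^ (r - 1 - i)
      * Bmat n ^ s).trace - trAB n (r - 1) (s + 1)) ∈ filt n (r + s - 2) := by
    refine sum_mem fun i hi => ?_
    rw [Finset.mem_range] at hi
    have := trace_word_sub_mem hn (w := List.replicate i true ++ List.replicate 1 false ++
      List.replicate (r - 1 - i) true ++ List.replicate s false) (p := r - 1)
      (q := s + 1) (d := r + s - 2) (by simp [List.count_replicate]; omega)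
      (by simp [List.count_replicate]) (by omega)
    simpa only [word_append, word_replicate_true, word_replicate_false, pow_one] using this
  convert Submodule.smul_mem _ (-2 : ℂ) h using 1
  rw [ham_trAB_zero_two hn, Finset.sum_sub_distrib, Finset.sum_const, Finset.card_range]
  simp only [MvPolynomial.smul_eq_C_mul, C_mul, nsmul_eq_mul, map_natCast, map_neg, map_ofNat]
  ring

/-! ### The Lie algebra generated by `calF`, up to constants and the rank one ideal -/

/-- The Lie algebra generated by `calF`, as a subspace. -/
def lieSub (n : ℕ) : Submodule ℂ (PolyFun n) where
  carrier := {g | LieGen n (calF n) g}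
  add_mem' := LieGen.add
  zero_mem' := LieGen.zero
  smul_mem' c _ := LieGen.smul c

theorem ham_mem_lieSub {f g : PolyFun n} (hf : f ∈ lieSub n) (hg : g ∈ lieSub n) :
    ham f g ∈ lieSub n := by
  rw [ham_apply]; exact LieGen.bracket hf hg

theorem calF_subset_lieSub : calF n ⊆ lieSub n := fun _ h => LieGen.base h

theorem trAB_two_zero_mem : trAB n 2 0 ∈ lieSub n := calF_subset_lieSub (by simp [calF])

theorem trAB_zero_two_mem : trAB n 0 2 ∈ lieSub n := calF_subset_lieSub (by simp [calF])

theorem trAB_three_zero_mem : trAB n 3 0 ∈ lieSub n := calF_subset_lieSub (by simp [calF])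

theorem trAB_one_one_eq (hn : 1 ≤ n) :
    trAB n 1 1 = (4⁻¹ : ℂ) • ham (trAB n 2 0) (trAB n 0 2) := by
  rw [ham_two_zero_zero_two hn, ← map_ofNat C 4, ← MvPolynomial.smul_eq_C_mul,
    inv_smul_smul₀ (by norm_num)]

theorem inv_trAB_one_one (hn : 1 ≤ n) : Inv (trAB n 1 1) := by
  rw [trAB_one_one_eq hn]
  exact ((inv_trAB_right_zero hn 2).ham (inv_trAB_zero_two hn)).smul _

theorem inv_of_mem_lieSub (hn : 1 ≤ n) {f : PolyFun n} (hf : f ∈ lieSub n) : Inv f := by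
  change LieGen n (calF n) f at hf
  induction hf with
  | base h =>
    rcases h with rfl | rfl | rfl | rfl
    exacts [inv_trAB_right_zero hn 2, inv_trAB_zero_two hn, inv_trAB_right_zero hn 3,
      (inv_trAB_one_one hn).pow 2]
  | zero => exact Inv.zero
  | add _ _ h₁ h₂ => exact h₁.add h₂
  | smul c _ h => exact h.smul c
  | bracket _ _ h₁ h₂ => rw [← ham_apply]; exact h₁.ham h₂

theorem trAB_two_zero_mul_one_one_mem (hn : 1 ≤ n) : trAB n 2 0 * trAB n 1 1 ∈ lieSub n := by
  have h := ham_mem_lieSub (trAB_two_zero_mem (n := n))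
    (calF_subset_lieSub (by simp [calF] : (trAB n 1 1) ^ 2 ∈ calF n))
  have e : ham (trAB n 2 0) (trAB n 1 1 ^ 2) = (4 : ℂ) • (trAB n 2 0 * trAB n 1 1) := by
    rw [Derivation.leibniz_pow, ham_two_zero_one_one hn]
    simp [MvPolynomial.smul_eq_C_mul, map_ofNat C 4]
    ring
  rw [e] at h
  exact (Submodule.smul_mem_iff _ (by norm_num)).mp h

/-- Functions agreeing with an element of the Lie algebra up to constants and the rank one
ideal. -/
noncomputable def lieMod (n : ℕ) : Submodule ℂ (PolyFun n) :=
  lieSub n ⊔ (Submodule.span ℂ {1} ⊔ (minorIdeal n).restrictScalars ℂ)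

theorem lieSub_le : lieSub n ≤ lieMod n := le_sup_left

theorem minorIdeal_le_lieMod : (minorIdeal n).restrictScalars ℂ ≤ lieMod n :=
  le_sup_right.trans le_sup_right

theorem one_mem_lieMod : (1 : PolyFun n) ∈ lieMod n :=
  Submodule.mem_sup_right (Submodule.mem_sup_left (Submodule.mem_span_singleton_self 1))

theorem mem_lieMod {f : PolyFun n} (hf : f ∈ lieMod n) :
    ∃ g ∈ lieSub n, ∃ c : ℂ, ∃ j ∈ minorIdeal n, f = g + (c • 1 + j) := by
  obtain ⟨g, hg, k, hk, rfl⟩ := Submodule.mem_sup.mp hf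
  obtain ⟨u, hu, j, hj, rfl⟩ := Submodule.mem_sup.mp hk
  obtain ⟨c, rfl⟩ := Submodule.mem_span_singleton.mp hu
  exact ⟨g, hg, c, j, hj, rfl⟩

theorem ham_mem_lieMod (hn : 1 ≤ n) {f g : PolyFun n} (hf : f ∈ lieMod n) (hfi : Inv f)
    (hg : g ∈ lieMod n) : ham f g ∈ lieMod n := by
  obtain ⟨g₁, hg₁, c₁, j₁, hj₁, rfl⟩ := mem_lieMod hf
  obtain ⟨g₂, hg₂, c₂, j₂, hj₂, rfl⟩ := mem_lieMod hg
  rw [map_add, map_add, Derivation.map_smul, Derivation.map_one_eq_zero, smul_zero, zero_add]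
  refine add_mem ?_ (minorIdeal_le_lieMod (hfi.ham_mem hj₂))
  rw [ham_antisymm, map_add, map_add, Derivation.map_smul, Derivation.map_one_eq_zero, smul_zero,
    zero_add]
  exact neg_mem (add_mem (lieSub_le (ham_mem_lieSub hg₂ hg₁))
    (minorIdeal_le_lieMod ((inv_of_mem_lieSub hn hg₂).ham_mem hj₁)))

theorem ham_mem_lieMod_of_mem_lieSub (hn : 1 ≤ n) {f g : PolyFun n} (hf : f ∈ lieSub n)
    (hg : g ∈ lieMod n) : ham f g ∈ lieMod n :=
  ham_mem_lieMod hn (lieSub_le hf) (inv_of_mem_lieSub hn hf) hg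

/-! ### Derivations of products of traces -/

/-- Combinations of reduced products of `l` traces of degree at most `d + 1`, modulo lower
degree. -/
noncomputable def topSpan (n l d : ℕ) : Submodule ℂ (PolyFun n) :=
  Submodule.span ℂ {f | ∃ s, Reduced s ∧ s.length = l ∧ deg s ≤ d + 1 ∧ trProd n s = f} ⊔ filt n d

theorem topSpan_le {l d : ℕ} {S : Submodule ℂ (PolyFun n)} (hd : filt n d ≤ S)
    (hS : ∀ s, Reduced s → s.length = l → deg s ≤ d + 1 → trProd n s ∈ S) :
    topSpan n l d ≤ S := by
  refine sup_le (Submodule.span_le.mpr ?_) hd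
  rintro _ ⟨s, h₁, h₂, h₃, rfl⟩
  exact hS s h₁ h₂ h₃

theorem filt_le_topSpan (l d : ℕ) : filt n d ≤ topSpan n l d := le_sup_right

theorem trProd_mem_topSpan {s : List (ℕ × ℕ)} (hs : Reduced s) {l d : ℕ} (hl : s.length = l)
    (hd : deg s ≤ d + 1) : trProd n s ∈ topSpan n l d :=
  Submodule.mem_sup_left (Submodule.subset_span ⟨s, hs, hl, hd, rfl⟩)

theorem trProd_mul_mem_topSpan {f : PolyFun n} {l d k e : ℕ} (hf : f ∈ topSpan n l d)
    {s : List (ℕ × ℕ)} (hs : Reduced s) (hk : s.length + l = k) (he : deg s + d ≤ e) :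
    trProd n s * f ∈ topSpan n k e := by
  suffices h : topSpan n l d ≤ (topSpan n k e).comap (LinearMap.mulLeft ℂ (trProd n s)) from h hf
  refine topSpan_le (fun g hg => ?_) fun t ht hl hd => ?_
  · exact filt_le_topSpan _ _ (filt_mono he (mul_mem_filt (trProd_mem_filt hs le_rfl) hg))
  · rw [Submodule.mem_comap, LinearMap.mulLeft_apply, ← trProd_append]
    refine trProd_mem_topSpan (fun x hx => ?_) (by simp; omega) (by rw [deg_append]; omega)
    rcases List.mem_append.mp hx with h | h
    exacts [hs x h, ht x h]

theorem trAB_mul_mem_topSpan {f : PolyFun n} {l d e p q : ℕ} (hf : f ∈ topSpan n l d)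
    (hpq : 2 ≤ p + q) (he : p + q + d ≤ e) : trAB n p q * f ∈ topSpan n (l + 1) e := by
  have := trProd_mul_mem_topSpan (k := l + 1) (e := e) hf (s := [(p, q)])
    (by simpa [Reduced] using hpq) (by simp; omega) (by simpa using he)
  simpa using this

theorem natCast_smul_trAB_mem_topSpan {p q d k : ℕ} (h : k ≠ 0 → 2 ≤ p + q ∧ p + q ≤ d + 1)
    (c : ℂ) : (c * k) • trAB n p q ∈ topSpan n 1 d := by
  rcases eq_or_ne k 0 with rfl | hk
  · simp
  · refine Submodule.smul_mem _ _ ?_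
    have := trProd_mem_topSpan (n := n) (s := [(p, q)]) (l := 1) (d := d)
      (by simpa [Reduced] using (h hk).1) rfl (by simpa using (h hk).2)
    simpa using this

theorem ham_trAB_zero_two_mem_topSpan (hn : 1 ≤ n) {r s : ℕ} (h : 2 ≤ r + s) :
    ham (trAB n 0 2) (trAB n r s) ∈ topSpan n 1 (r + s - 1) := by
  have h₁ := filt_le_topSpan 1 _ (filt_mono (by omega : _ ≤ r + s - 1)
    (ham_trAB_zero_two_add_mem hn r s))
  have h₂ := natCast_smul_trAB_mem_topSpan (n := n) (p := r - 1) (q := s + 1) (d := r + s - 1)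
    (k := r) (by omega) 2
  simpa using sub_mem h₁ h₂

theorem ham_trProd_mem_topSpan (hn : 1 ≤ n) {s : List (ℕ × ℕ)} (hs : Reduced s) :
    ham (trAB n 0 2) (trProd n s) ∈ topSpan n s.length (deg s - 1) := by
  induction s with
  | nil => simp
  | cons t l ih =>
    obtain ⟨ht, hl⟩ := reduced_cons.mp hs
    rw [trProd_cons, Derivation.leibniz, smul_eq_mul, smul_eq_mul]
    refine add_mem ?_ ?_
    · rcases l with _ | ⟨u, l⟩
      · simp
      · have hu := (reduced_cons.mp hl).1
        exact trAB_mul_mem_topSpan (ih hl) ht (by simp; omega)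
    · exact trProd_mul_mem_topSpan (ham_trAB_zero_two_mem_topSpan hn ht) hl (by simp)
        (by simp; omega)

/-- The derivation induced by the infinitesimal translation of `B` by the identity. -/
noncomputable def transl (n : ℕ) : List (ℕ × ℕ) → PolyFun n
  | [] => 0
  | t :: l => (t.2 : ℂ) • (trAB n t.1 (t.2 - 1) * trProd n l) + trAB n t.1 t.2 * transl n l

/-- The total degree in `B` of a list of exponents. -/
def bdeg (s : List (ℕ × ℕ)) : ℕ := (s.map Prod.snd).sum

@[simp] theorem bdeg_cons (t : ℕ × ℕ) (s : List (ℕ × ℕ)) :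
    bdeg (t :: s) = t.2 + bdeg s := by simp [bdeg]

theorem transl_mem_span (hn : 1 ≤ n) {s : List (ℕ × ℕ)} (hs : Reduced s) :
    transl n s ∈ Submodule.span ℂ {f | ∃ s', Reduced s' ∧ s'.length = s.length ∧
      deg s' + 1 = deg s ∧ bdeg s' + 1 = bdeg s ∧ trProd n s' = f} := by
  induction s with
  | nil => simp [transl]
  | cons t l ih =>
    obtain ⟨ht, hl⟩ := reduced_cons.mp hs
    rw [transl]
    refine add_mem ?_ ?_
    · rcases Nat.eq_zero_or_pos t.2 with h0 | h0
      · simp [h0]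
      refine Submodule.smul_mem _ _ ?_
      rcases eq_or_ne (t.1 + t.2) 2 with h2 | h2
      · rw [trAB_eq_zero hn (by omega), zero_mul]; exact zero_mem _
      · exact Submodule.subset_span ⟨(t.1, t.2 - 1) :: l, reduced_cons.mpr ⟨by simp; omega, hl⟩,
          by simp, by simp; omega, by simp; omega, by simp⟩
    · suffices h : Submodule.span ℂ _ ≤ (Submodule.span ℂ _).comap
          (LinearMap.mulLeft ℂ (trAB n t.1 t.2)) from h (ih hl)
      refine Submodule.span_le.mpr ?_
      rintro _ ⟨s', h₁, h₂, h₃, h₄, rfl⟩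
      exact Submodule.subset_span ⟨t :: s', reduced_cons.mpr ⟨ht, h₁⟩, by simp [h₂],
        by simp; omega, by simp; omega, by simp⟩

theorem ham_trAB_right_zero_mem_topSpan (hn : 1 ≤ n) {p r s : ℕ} (hp : 2 ≤ p) (h : 2 ≤ r + s) :
    ham (trAB n (p + 1) 0) (trAB n r s)
      + (((p + 1 : ℕ) : ℂ) * (n : ℂ)⁻¹) • (trAB n p 0 * ((s : ℂ) • trAB n r (s - 1)))
      ∈ topSpan n 1 (r + s + (p - 2)) := by
  have h₁ := filt_le_topSpan 1 _ (filt_mono (by omega : _ ≤ r + s + (p - 2))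
    (ham_trAB_right_zero_sub_mem hn (by omega : 1 ≤ p + 1) r s))
  have h₂ := natCast_smul_trAB_mem_topSpan (n := n) (p := p + 1 + r - 1) (q := s - 1)
    (d := r + s + (p - 2)) (k := s) (by omega) ((p + 1 : ℕ) : ℂ)
  convert add_mem h₁ h₂ using 1
  rw [Nat.add_sub_cancel, mul_smul_comm, smul_smul, mul_right_comm]
  abel

theorem ham_trProd_add_mem_topSpan (hn : 1 ≤ n) {p : ℕ} (hp : 2 ≤ p) {s : List (ℕ × ℕ)}
    (hs : Reduced s) : ham (trAB n (p + 1) 0) (trProd n s)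
      + (((p + 1 : ℕ) : ℂ) * (n : ℂ)⁻¹) • (trAB n p 0 * transl n s)
      ∈ topSpan n s.length (deg s + (p - 2)) := by
  induction s with
  | nil => simp [transl]
  | cons t l ih =>
    obtain ⟨ht, hl⟩ := reduced_cons.mp hs
    have h₁ := trAB_mul_mem_topSpan (e := deg (t :: l) + (p - 2)) (ih hl) ht (by simp; omega)
    have h₂ := trProd_mul_mem_topSpan (k := l.length + 1) (e := deg (t :: l) + (p - 2))
      (ham_trAB_right_zero_mem_topSpan hn hp ht) hl rfl (by simp; omega)
    rw [List.length_cons]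
    convert add_mem h₁ h₂ using 1
    rw [trProd_cons, transl, Derivation.leibniz]
    simp only [MvPolynomial.smul_eq_C_mul, smul_eq_mul]
    ring

/-! ### All products of traces lie in the Lie algebra -/

theorem trAB_two_zero_pow_mem (hn : 1 ≤ n) (k : ℕ) : trAB n 2 0 ^ k ∈ lieMod n := by
  induction k with
  | zero => simpa using one_mem_lieMod
  | succ k ih =>
    rcases Nat.eq_zero_or_pos k with rfl | hk
    · simpa using lieSub_le trAB_two_zero_mem
    have h := ham_mem_lieMod_of_mem_lieSub hn (trAB_two_zero_mul_one_one_mem hn) ih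
    have e : ham (trAB n 2 0 * trAB n 1 1) (trAB n 2 0 ^ k)
        = (-(2 * (k : ℂ))) • trAB n 2 0 ^ (k + 1) := by
      rw [Derivation.leibniz_pow, ham_mul_apply, ham_antisymm (trAB n 1 1),
        ham_two_zero_one_one hn, ham_trAB_right_zero hn 2 2 0]
      obtain ⟨m, rfl⟩ := Nat.exists_eq_add_of_le' hk
      simp [MvPolynomial.smul_eq_C_mul, map_ofNat C 2]
      ring
    rw [e] at h
    refine (Submodule.smul_mem_iff _ ?_).mp h
    have : (k : ℂ) ≠ 0 := by exact_mod_cast hk.ne'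
    simpa using this

theorem pow_mem_filt {d : ℕ} {f : PolyFun n} (hf : f ∈ filt n d) (k : ℕ) :
    f ^ k ∈ filt n (k * d) := by
  induction k with
  | zero => simpa using one_mem_filt 0
  | succ k ih => rw [pow_succ, add_mul, one_mul]; exact mul_mem_filt ih hf

theorem ham_three_zero_pow_mul (hn : 1 ≤ n) (j k : ℕ) :
    ham (trAB n 3 0) (trAB n 2 0 ^ k * trAB n (j + 1) 1) =
      (3 : ℂ) • (trAB n 2 0 ^ k * trAB n (j + 3) 0)
      - (3 * (n : ℂ)⁻¹) • (trAB n 2 0 ^ (k + 1) * trAB n (j + 1) 0) := by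
  rw [Derivation.leibniz, Derivation.leibniz_pow, ham_trAB_right_zero hn 3 2 0,
    ham_trAB_right_zero hn 3 (j + 1) 1]
  simp [trAB, MvPolynomial.smul_eq_C_mul, map_ofNat C 3, ← pow_add]
  ring

section Step

variable {N : ℕ} (hlow : ∀ d, d < N → filt n d ≤ lieMod n)
include hlow

theorem pow_mul_trAB_mem (hn : 1 ≤ n) (j k : ℕ) (hN : 2 * k + j ≤ N) :
    trAB n 2 0 ^ k * trAB n j 0 ∈ lieMod n := by
  induction j using Nat.strong_induction_on generalizing k with
  | _ j ih =>
    obtain _ | _ | _ | j := j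
    · rw [trAB_zero_zero, mul_smul_comm, mul_one]
      exact Submodule.smul_mem _ _ (trAB_two_zero_pow_mem hn k)
    · rw [trAB_eq_zero hn (by omega : 0 + 1 + 0 = 1), mul_zero]; exact zero_mem _
    · rw [← pow_succ]; exact trAB_two_zero_pow_mem hn (k + 1)
    · have h₁ : trAB n 2 0 ^ k * trAB n (j + 1) 1 ∈ lieMod n :=
        hlow (k * 2 + (j + 2)) (by omega)
          (mul_mem_filt (pow_mem_filt (trAB_mem_filt hn 2 0) k) (trAB_mem_filt hn (j + 1) 1))
      have h₂ := ham_mem_lieMod_of_mem_lieSub hn trAB_three_zero_mem h₁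
      have h₃ := ih (j + 1) (by omega) (k + 1) (by omega)
      rw [ham_three_zero_pow_mul hn] at h₂
      have h₄ := add_mem h₂ (Submodule.smul_mem _ (3 * (n : ℂ)⁻¹) h₃)
      rw [sub_add_cancel] at h₄
      exact (Submodule.smul_mem_iff _ (by norm_num)).mp h₄

theorem trAB_mem_lieMod (hn : 1 ≤ n) (q p : ℕ) (hN : p + q ≤ N) (h : 1 ≤ N) :
    trAB n p q ∈ lieMod n := by
  induction q generalizing p with
  | zero => simpa using pow_mul_trAB_mem hlow hn p 0 (by omega)
  | succ q ih =>
    have h₁ := ham_mem_lieMod_of_mem_lieSub hn trAB_zero_two_mem (ih (p + 1) (by omega))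
    have h₂ := hlow _ (by omega) (ham_trAB_zero_two_add_mem hn (p + 1) q)
    have h₃ := sub_mem h₂ h₁
    rw [add_sub_cancel_left] at h₃
    refine (Submodule.smul_mem_iff _ ?_).mp h₃
    exact_mod_cast (by omega : 2 * (p + 1) ≠ 0)

theorem trProd_cons_right_zero_mem (hn : 1 ≤ n) {R : ℕ}
    (hR : ∀ s, Reduced s → s.length = R → deg s ≤ N → trProd n s ∈ lieMod n)
    (p : ℕ) (u : ℕ × ℕ) (l : List (ℕ × ℕ)) (hs : Reduced ((p, 0) :: u :: l))
    (hl : l.length + 1 = R) (hN : deg ((p, 0) :: u :: l) ≤ N) :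
    trProd n ((p, 0) :: u :: l) ∈ lieMod n := by
  induction hb : bdeg l using Nat.strong_induction_on generalizing u l with
  | _ b ih =>
    obtain ⟨r, s⟩ := u
    obtain ⟨hp, hu, hl'⟩ : 2 ≤ p ∧ 2 ≤ r + s ∧ Reduced l := by
      simpa [reduced_cons] using hs
    have hN' : p + (r + s + deg l) ≤ N := by simpa using hN
    have hs' : Reduced ((r, s + 1) :: l) := reduced_cons.mpr ⟨by simp; omega, hl'⟩
    have h₁ : ham (trAB n (p + 1) 0) (trProd n ((r, s + 1) :: l)) ∈ lieMod n :=
      ham_mem_lieMod hn (trAB_mem_lieMod hlow hn 0 (p + 1) (by omega) (by omega))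
        (inv_trAB_right_zero hn _) (hR _ hs' (by simpa using hl) (by simp; omega))
    have h₂ : topSpan n ((r, s + 1) :: l).length (deg ((r, s + 1) :: l) + (p - 2)) ≤ lieMod n :=
      topSpan_le (hlow _ (by simp; omega)) fun s' h h' h'' =>
        hR s' h (by rw [h']; simpa using hl) (by simp at h''; omega)
    have h₃ := sub_mem (h₂ (ham_trProd_add_mem_topSpan hn hp hs')) h₁
    rw [add_sub_cancel_left] at h₃
    have hc : ((p + 1 : ℕ) : ℂ) * (n : ℂ)⁻¹ ≠ 0 :=
      mul_ne_zero (by exact_mod_cast Nat.succ_ne_zero p)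
        (inv_ne_zero (by exact_mod_cast (by omega : n ≠ 0)))
    have h₄ := (Submodule.smul_mem_iff _ hc).mp h₃
    have h₅ : trAB n p 0 * (trAB n r (s + 1) * transl n l) ∈ lieMod n := by
      suffices h : Submodule.span ℂ _ ≤ (lieMod n).comap (LinearMap.mulLeft ℂ
        (trAB n p 0 * trAB n r (s + 1))) by
        have := h (transl_mem_span hn hl')
        simpa [mul_assoc] using this
      refine Submodule.span_le.mpr ?_
      rintro _ ⟨l', h₁, h₂, h₃, h₄, rfl⟩
      have := ih (bdeg l') (by omega) (r, s + 1) l'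
        (by simp only [reduced_cons]; exact ⟨by omega, by omega, h₁⟩) (by omega)
        (by simp; omega) rfl
      simpa [mul_assoc] using this
    have h₆ : ((s + 1 : ℕ) : ℂ) • trProd n ((p, 0) :: (r, s) :: l) ∈ lieMod n := by
      have := sub_mem h₄ h₅
      simpa [transl, mul_add, mul_sub] using this
    exact (Submodule.smul_mem_iff _ (by exact_mod_cast Nat.succ_ne_zero s)).mp h₆

theorem trProd_cons_mem (hn : 1 ≤ n) {R : ℕ} (hR0 : 1 ≤ R)
    (hR : ∀ s, Reduced s → s.length = R → deg s ≤ N → trProd n s ∈ lieMod n)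
    (q p : ℕ) (s : List (ℕ × ℕ)) (hs : Reduced ((p, q) :: s)) (hl : s.length = R)
    (hN : deg ((p, q) :: s) ≤ N) : trProd n ((p, q) :: s) ∈ lieMod n := by
  induction q generalizing p s with
  | zero =>
    obtain _ | ⟨u, l⟩ := s
    · simp at hl; omega
    · exact trProd_cons_right_zero_mem hlow hn hR p u l hs (by simpa using hl) hN
  | succ q ih =>
    obtain ⟨hpq, hs'⟩ := reduced_cons.mp hs
    have hpq' : 2 ≤ p + 1 + q := by simp at hpq; omega
    have hN' : p + (q + 1) + deg s ≤ N := by simpa using hN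
    have hs0 : 2 ≤ deg s := by
      obtain _ | ⟨u, l⟩ := s
      · simp at hl; omega
      · have := (reduced_cons.mp hs').1
        simp; omega
    have h₁ := ham_mem_lieMod_of_mem_lieSub hn trAB_zero_two_mem
      (ih (p + 1) s (reduced_cons.mpr ⟨hpq', hs'⟩) hl (by simp; omega))
    rw [trProd_cons, Derivation.leibniz, smul_eq_mul, smul_eq_mul] at h₁
    have h₂ : trAB n (p + 1) q * ham (trAB n 0 2) (trProd n s) ∈ lieMod n := by
      suffices h : topSpan n s.length (deg s - 1) ≤ (lieMod n).comap
        (LinearMap.mulLeft ℂ (trAB n (p + 1) q)) from h (ham_trProd_mem_topSpan hn hs')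
      refine topSpan_le (fun f hf => ?_) fun s₁ h₁ h₂ h₃ => ?_
      · exact hlow (p + 1 + q + (deg s - 1)) (by omega) (mul_mem_filt (trAB_mem_filt hn _ _) hf)
      · have := ih (p + 1) s₁ (reduced_cons.mpr ⟨hpq', h₁⟩) (h₂.trans hl) (by simp; omega)
        simpa using this
    have h₃ : trProd n s * (ham (trAB n 0 2) (trAB n (p + 1) q)
        + (2 * ((p + 1 : ℕ) : ℂ)) • trAB n p (q + 1)) ∈ lieMod n :=
      hlow (deg s + (p + 1 + q - 2)) (by omega) (mul_mem_filt (trProd_mem_filt hs' le_rfl)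
        (ham_trAB_zero_two_add_mem hn (p + 1) q))
    have h₄ := sub_mem h₃ (sub_mem h₁ h₂)
    rw [add_sub_cancel_left, mul_add, add_sub_cancel_left, mul_smul_comm, mul_comm (trProd n s)] at h₄
    rw [trProd_cons]
    refine (Submodule.smul_mem_iff _ ?_).mp h₄
    exact_mod_cast (by omega : 2 * (p + 1) ≠ 0)

theorem trProd_mem_lieMod_of_low (hn : 1 ≤ n) (hN0 : 1 ≤ N) (R : ℕ) :
    ∀ s, Reduced s → s.length = R → deg s ≤ N → trProd n s ∈ lieMod n := by
  induction R with
  | zero =>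
    intro s _ hl _
    rw [List.length_eq_zero_iff.mp hl]
    exact one_mem_lieMod
  | succ R ih =>
    rintro (_ | ⟨⟨p, q⟩, s⟩) hs hl hN
    · simp at hl
    · rcases Nat.eq_zero_or_pos R with rfl | hR
      · obtain rfl : s = [] := by simpa using hl
        simpa using trAB_mem_lieMod hlow hn q p (by simpa using hN) hN0
      · exact trProd_cons_mem hlow hn hR ih q p s hs (by simpa using hl) hN

end Step

theorem filt_le_lieMod (hn : 1 ≤ n) (N : ℕ) : filt n N ≤ lieMod n := by
  induction N using Nat.strong_induction_on with
  | _ N ih =>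
    refine filt_le minorIdeal_le_lieMod fun s hs hd => ?_
    rcases Nat.eq_zero_or_pos N with rfl | hN
    · obtain _ | ⟨t, l⟩ := s
      · exact one_mem_lieMod
      · have := (reduced_cons.mp hs).1
        simp at hd; omega
    · exact trProd_mem_lieMod_of_low ih hn hN s.length s hs rfl hd

theorem prod_mem_filt {ι : Type*} (s : Finset ι) (f : ι → PolyFun n)
    (h : ∀ i ∈ s, ∃ d, f i ∈ filt n d) : ∃ d, ∏ i ∈ s, f i ∈ filt n d :=
  Finset.prod_induction f (fun g => ∃ d, g ∈ filt n d)
    (fun _ _ ⟨a, ha⟩ ⟨b, hb⟩ => ⟨a + b, mul_mem_filt ha hb⟩) ⟨0, one_mem_filt 0⟩ h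

/-! ### Evaluation on the Calogero–Moser variety -/

theorem exists_eq_mul_of_rank_eq_one (M : Matrix (Fin n) (Fin n) ℂ) (h : M.rank = 1) :
    ∃ v w : Fin n → ℂ, ∀ a b, M a b = v a * w b := by
  rw [Matrix.rank, finrank_eq_one_iff'] at h
  obtain ⟨v, -, hv⟩ := h
  choose w hw using fun b => hv ⟨M.mulVecLin (Pi.single b 1), LinearMap.mem_range_self _ _⟩
  refine ⟨v.1, w, fun a b => ?_⟩
  have := congrFun (congrArg Subtype.val (hw b)) a
  simpa [mul_comm] using this.symm

/-- Evaluation as a ring homomorphism. -/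
noncomputable def evalHom (P : Matrix (Fin n) (Fin n) ℂ × Matrix (Fin n) (Fin n) ℂ) :
    PolyFun n →+* ℂ :=
  MvPolynomial.eval (Sum.elim (fun p => P.1 p.1 p.2) (fun p => P.2 p.1 p.2))

theorem evalHom_Theta {P : Matrix (Fin n) (Fin n) ℂ × Matrix (Fin n) (Fin n) ℂ}
    (h₁ : P.1.trace = 0) (h₂ : P.2.trace = 0) :
    (Theta n).map (evalHom P) = P.1 * P.2 - P.2 * P.1 - Complex.I • 1 := by
  have hX : (Xmat n).map (evalHom P) = P.1 := by ext a b; simp [Xmat, evalHom]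
  have hY : (Ymat n).map (evalHom P) = P.2 := by ext a b; simp [Ymat, evalHom]
  have hA : (Amat n).map (evalHom P) = P.1 := by
    have : evalHom P (Xmat n).trace = 0 := by
      rw [← h₁]; conv_rhs => rw [← hX]
      simp [Matrix.trace]
    ext a b
    rw [Matrix.map_apply, Amat, Matrix.sub_apply, map_sub, Matrix.smul_apply, smul_eq_mul,
      map_mul, map_mul, this, mul_zero, zero_mul, sub_zero, ← hX, Matrix.map_apply]
  have hB : (Bmat n).map (evalHom P) = P.2 := by
    have : evalHom P (Ymat n).trace = 0 := by
      rw [← h₂]; conv_rhs => rw [← hY]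
      simp [Matrix.trace]
    ext a b
    rw [Matrix.map_apply, Bmat, Matrix.sub_apply, map_sub, Matrix.smul_apply, smul_eq_mul,
      map_mul, map_mul, this, mul_zero, zero_mul, sub_zero, ← hY, Matrix.map_apply]
  have hone : ((C Complex.I : PolyFun n) • (1 : Matrix (Fin n) (Fin n) (PolyFun n))).map (evalHom P)
      = Complex.I • 1 := by
    ext a b
    by_cases h : a = b <;> simp [h, evalHom]
  rw [Theta, Matrix.map_sub _ (map_sub _), Matrix.map_sub _ (map_sub _), Matrix.map_mul,
    Matrix.map_mul, hA, hB, hone]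

theorem evalP_minorIdeal {P : Matrix (Fin n) (Fin n) ℂ × Matrix (Fin n) (Fin n) ℂ}
    (hP : P ∈ Shat n) {j : PolyFun n} (hj : j ∈ minorIdeal n) : evalP P.1 P.2 j = 0 := by
  obtain ⟨h₁, h₂, h₃⟩ := hP
  rw [← evalHom_Theta h₁ h₂] at h₃
  obtain ⟨v, w, hvw⟩ := exists_eq_mul_of_rank_eq_one _ h₃
  simp only [Matrix.map_apply] at hvw
  suffices h : minorIdeal n ≤ RingHom.ker (evalHom P) from h hj
  refine Ideal.span_le.mpr ?_
  rintro _ ⟨t, rfl⟩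
  simp only [SetLike.mem_coe, RingHom.mem_ker, map_sub, map_mul, hvw]
  ring

theorem exists_lieGen_of_mem_filt (hn : 1 ≤ n) {g₁ : PolyFun n} (hg₁ : LieGen n (calF n) g₁)
    (h₁ : ∀ P ∈ Shat n, evalP P.1 P.2 (trAB n 0 0) = evalP P.1 P.2 g₁)
    {f : PolyFun n} {d : ℕ} (hf : f ∈ filt n d) :
    ∃ g, LieGen n (calF n) g ∧ ∀ P ∈ Shat n, evalP P.1 P.2 f = evalP P.1 P.2 g := by
  obtain ⟨g, hg, c, j, hj, rfl⟩ := mem_lieMod (filt_le_lieMod hn d hf)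
  refine ⟨g + (c * (n : ℂ)⁻¹) • g₁, hg.add (hg₁.smul _), fun P hP => ?_⟩
  have hn0 : (n : ℂ) ≠ 0 := by exact_mod_cast (by omega : n ≠ 0)
  have h := h₁ P hP
  have hj' := evalP_minorIdeal hP hj
  simp only [trAB_zero_zero, evalP, map_add, smul_eval, map_one, mul_one] at h hj' ⊢
  rw [hj', ← h]
  field_simp
  ring

end CalogeroMoser

/-- STATEMENT 10 (Lemma on `(∏ tr A^{i_a}) · ∏ tr A^{p_b} B^{q_b}`), assuming the
induction hypothesis `H(D)`. -/
theorem stmt_10 (n : ℕ) (hn : 1 ≤ n) (D : ℕ)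
    (H : ∀ m : ℕ, 1 ≤ m → ∀ p q : ℕ → ℕ,
      (∑ k ∈ Finset.range m, (p k + q k)) ≤ D →
      ∃ g : PolyFun n, LieGen n (calF n) g ∧
        ∀ P ∈ Shat n,
          evalP P.1 P.2 (∏ k ∈ Finset.range m, trAB n (p k) (q k)) = evalP P.1 P.2 g)
    (l : ℕ) (hl : 1 ≤ l) (m : ℕ) (i : ℕ → ℕ) (p q : ℕ → ℕ)
    (hi : ∀ a < l, 2 ≤ i a)
    (hdeg : (∑ a ∈ Finset.range l, i a) + (∑ b ∈ Finset.range m, (p b + q b)) ≤ D + 4) :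
    ∃ g : PolyFun n, LieGen n (calF n) g ∧
      ∀ P ∈ Shat n,
        evalP P.1 P.2
            ((∏ a ∈ Finset.range l, trAB n (i a) 0) *
              ∏ b ∈ Finset.range m, trAB n (p b) (q b))
          = evalP P.1 P.2 g := by
  obtain ⟨g₁, hg₁, h₁⟩ := H 1 le_rfl (fun _ => 0) (fun _ => 0) (by simp)
  obtain ⟨a, ha⟩ := CalogeroMoser.prod_mem_filt (Finset.range l) (fun a => trAB n (i a) 0)
    fun _ _ => ⟨_, CalogeroMoser.trAB_mem_filt hn _ _⟩
  obtain ⟨b, hb⟩ := CalogeroMoser.prod_mem_filt (Finset.range m) (fun b => trAB n (p b) (q b))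
    fun _ _ => ⟨_, CalogeroMoser.trAB_mem_filt hn _ _⟩
  exact CalogeroMoser.exists_lieGen_of_mem_filt hn hg₁ (by simpa using h₁)
    (CalogeroMoser.mul_mem_filt ha hb)
end

section
/- Let D ≥ 0 be an integer and assume the induction hypothesis H(D): for every m ≥ 1 and all natural numbers p_1, …, p_m, q_1, …, q_m with Σ_k (p_k + q_k) ≤ D, the product Π_{k=1}^m tr(A^{p_k} B^{q_k}) agrees at every point of Ŝ_n with some element of Lie(ℱ). Then for every m ≥ 1 and all natural numbers p_1, …, p_m, q_1, …, q_m with Σ_k (p_k + q_k) ≤ D + 4, the product Π_{k=1}^m tr(A^{p_k} B^{q_k}) agrees at every point of Ŝ_n with some element of Lie(ℱ). -/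
open MvPolynomial Matrix

/-! ### The Poisson bracket -/

section PoissonBracket

variable {n : ℕ}

/-- The Hamiltonian derivation `{F, ·}`. -/
noncomputable def ham (F : PolyFun n) : Derivation ℂ (PolyFun n) (PolyFun n) :=
  ∑ j : Fin n, ∑ k : Fin n,
    (pderiv (Sum.inl (j, k)) F • pderiv (Sum.inr (k, j))
      - pderiv (Sum.inr (j, k)) F • pderiv (Sum.inl (k, j)))

theorem ham_apply (F G : PolyFun n) : ham F G = pbracket F G := by
  simp only [ham, pbracket, ← Derivation.coeFnAddMonoidHom_apply, map_sum, Finset.sum_apply]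
  simp

theorem pbracket_antisymm (F G : PolyFun n) : pbracket F G = -pbracket G F := by
  unfold pbracket
  rw [Finset.sum_comm, ← Finset.sum_neg_distrib]
  refine Finset.sum_congr rfl fun j _ => ?_
  rw [← Finset.sum_neg_distrib]
  exact Finset.sum_congr rfl fun k _ => by ring

theorem pbracket_add_right (F G H : PolyFun n) :
    pbracket F (G + H) = pbracket F G + pbracket F H := by
  simp only [← ham_apply, map_add]

theorem pbracket_sub_right (F G H : PolyFun n) :
    pbracket F (G - H) = pbracket F G - pbracket F H := by
  simp only [← ham_apply, map_sub]

theorem pbracket_smul_right (c : ℂ) (F G : PolyFun n) :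
    pbracket F (c • G) = c • pbracket F G := by
  simp only [← ham_apply, Derivation.map_smul]

theorem pbracket_mul_right (F G H : PolyFun n) :
    pbracket F (G * H) = G * pbracket F H + H * pbracket F G := by
  simp only [← ham_apply, Derivation.leibniz, smul_eq_mul]

theorem pbracket_C_right (F : PolyFun n) (c : ℂ) : pbracket F (C c) = 0 := by
  rw [← ham_apply, derivation_C]

theorem pbracket_zero_right (F : PolyFun n) : pbracket F 0 = 0 := by
  rw [← ham_apply, map_zero]

theorem pbracket_add_left (F G H : PolyFun n) :
    pbracket (F + G) H = pbracket F H + pbracket G H := by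
  rw [pbracket_antisymm, pbracket_add_right, pbracket_antisymm H F, pbracket_antisymm H G]; ring

theorem pbracket_mul_left (F G H : PolyFun n) :
    pbracket (F * G) H = F * pbracket G H + G * pbracket F H := by
  rw [pbracket_antisymm, pbracket_mul_right, pbracket_antisymm H F, pbracket_antisymm H G]; ring

theorem pbracket_C_left (c : ℂ) (F : PolyFun n) : pbracket (C c) F = 0 := by
  rw [pbracket_antisymm, pbracket_C_right, neg_zero]

theorem pbracket_X_X (u v : (Fin n × Fin n) ⊕ (Fin n × Fin n)) :
    ∃ c : ℂ, pbracket (MvPolynomial.X u : PolyFun n) (MvPolynomial.X v) = C c := by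
  suffices h : pbracket (MvPolynomial.X u : PolyFun n) (MvPolynomial.X v) ∈
      (algebraMap ℂ (PolyFun n)).range by
    obtain ⟨c, hc⟩ := h
    exact ⟨c, hc.symm⟩
  have h1 : ∀ a b, pderiv a (MvPolynomial.X b : PolyFun n) ∈ (algebraMap ℂ (PolyFun n)).range := by
    intro a b
    classical
    rw [pderiv_X]
    by_cases hab : a = b
    · subst hab
      simp
    · rw [Pi.single_eq_of_ne (Ne.symm hab)]
      exact zero_mem _
  exact sum_mem fun j _ => sum_mem fun k _ =>
    sub_mem (mul_mem (h1 _ _) (h1 _ _)) (mul_mem (h1 _ _) (h1 _ _))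

/-- The Jacobi identity. -/
theorem pbracket_jacobi (F G H : PolyFun n) :
    pbracket F (pbracket G H) + pbracket G (pbracket H F) + pbracket H (pbracket F G) = 0 := by
  have mul_closed : ∀ F₁ F₂ G H : PolyFun n,
      pbracket F₁ (pbracket G H) + pbracket G (pbracket H F₁) + pbracket H (pbracket F₁ G) = 0 →
      pbracket F₂ (pbracket G H) + pbracket G (pbracket H F₂) + pbracket H (pbracket F₂ G) = 0 →
      pbracket (F₁ * F₂) (pbracket G H) + pbracket G (pbracket H (F₁ * F₂))
        + pbracket H (pbracket (F₁ * F₂) G) = 0 := by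
    intro F₁ F₂ G H h1 h2
    simp only [pbracket_mul_left, pbracket_mul_right, pbracket_add_right]
    rw [pbracket_antisymm F₁ G, pbracket_antisymm F₂ G] at *
    linear_combination F₁ * h2 + F₂ * h1
  have add_closed : ∀ F₁ F₂ G H : PolyFun n,
      pbracket F₁ (pbracket G H) + pbracket G (pbracket H F₁) + pbracket H (pbracket F₁ G) = 0 →
      pbracket F₂ (pbracket G H) + pbracket G (pbracket H F₂) + pbracket H (pbracket F₂ G) = 0 →
      pbracket (F₁ + F₂) (pbracket G H) + pbracket G (pbracket H (F₁ + F₂))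
        + pbracket H (pbracket (F₁ + F₂) G) = 0 := by
    intro F₁ F₂ G H h1 h2
    simp only [pbracket_add_left, pbracket_add_right]
    linear_combination h1 + h2
  have reduce : ∀ G H : PolyFun n,
      (∀ v, pbracket (MvPolynomial.X v) (pbracket G H) + pbracket G (pbracket H (MvPolynomial.X v))
        + pbracket H (pbracket (MvPolynomial.X v) G) = 0) →
      ∀ F, pbracket F (pbracket G H) + pbracket G (pbracket H F) + pbracket H (pbracket F G) = 0 := by
    intro G H hX F
    induction F using MvPolynomial.induction_on with
    | C a => simp only [pbracket_C_left, pbracket_C_right, pbracket_zero_right, add_zero]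
    | add p q hp hq => exact add_closed _ _ _ _ hp hq
    | mul_X p v hp => exact mul_closed _ _ _ _ hp (hX v)
  have rotate : ∀ F G H : PolyFun n,
      pbracket F (pbracket G H) + pbracket G (pbracket H F) + pbracket H (pbracket F G) = 0 →
      pbracket G (pbracket H F) + pbracket H (pbracket F G) + pbracket F (pbracket G H) = 0 := by
    intro F G H h
    linear_combination h
  refine reduce G H (fun u => ?_) F
  refine rotate _ _ _ (rotate _ _ _ (reduce H _ (fun v => ?_) G))
  refine rotate _ _ _ (rotate _ _ _ (reduce _ _ (fun w => ?_) H))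
  obtain ⟨a, ha⟩ := pbracket_X_X (n := n) u v
  obtain ⟨b, hb⟩ := pbracket_X_X (n := n) v w
  obtain ⟨c, hc⟩ := pbracket_X_X (n := n) w u
  simp only [ha, hb, hc, pbracket_C_right, add_zero]

end PoissonBracket

/-! ### Derivations applied entrywise to matrices -/

section LeibnizMap

variable {R : Type*} [Ring R]

theorem leibniz_map_one {D : R → R} (hD : ∀ x y, D (x * y) = D x * y + x * D y) : D 1 = 0 := by
  have h := hD 1 1
  simp only [mul_one, one_mul] at h
  exact left_eq_add.mp h

theorem leibniz_map_pow {D : R → R} (hD : ∀ x y, D (x * y) = D x * y + x * D y) (x : R) (s : ℕ) :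
    D (x ^ s) = ∑ j ∈ Finset.range s, x ^ j * D x * x ^ (s - 1 - j) := by
  induction s with
  | zero => simp [leibniz_map_one hD]
  | succ s ih =>
    rw [pow_succ, hD, ih, Finset.sum_range_succ, Finset.sum_mul]
    congr 1
    · refine Finset.sum_congr rfl fun j hj => ?_
      have : s + 1 - 1 - j = s - 1 - j + 1 := by
        have := Finset.mem_range.mp hj
        omega
      rw [this, pow_succ]
      simp only [mul_assoc]
    · simp

end LeibnizMap

section DerivationMap

variable {R : Type*} [CommRing R] [Algebra ℂ R] {ι : Type*} [Fintype ι]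

theorem derivation_map_mul (δ : Derivation ℂ R R) (U V : Matrix ι ι R) :
    (U * V).map δ = U.map δ * V + U * V.map δ := by
  ext i j
  simp only [Matrix.map_apply, Matrix.mul_apply, Matrix.add_apply, map_sum, Derivation.leibniz,
    smul_eq_mul, ← Finset.sum_add_distrib]
  exact Finset.sum_congr rfl fun k _ => by ring

theorem derivation_trace (δ : Derivation ℂ R R) (U : Matrix ι ι R) :
    δ (trace U) = trace (U.map δ) := by
  simp [trace]

theorem derivation_trace_pow [DecidableEq ι] (δ : Derivation ℂ R R) (U : Matrix ι ι R) (k : ℕ) :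
    δ (trace (U ^ k)) = k • trace (U ^ (k - 1) * U.map δ) := by
  rw [derivation_trace,
    leibniz_map_pow (D := fun V : Matrix ι ι R => V.map δ) (derivation_map_mul δ), trace_sum]
  rw [Finset.sum_congr rfl (g := fun _ => trace (U ^ (k - 1) * U.map δ))]
  · simp
  · intro j hj
    rw [trace_mul_comm, ← mul_assoc, ← pow_add]
    congr 3
    have := Finset.mem_range.mp hj
    omega

end DerivationMap

/-! ### Brackets with traces -/

section TraceBrackets

variable {n : ℕ}

theorem pbracket_Xmat_Ymat (a b l m : Fin n) :
    pbracket (Xmat n a b) (Ymat n l m) = if a = m ∧ b = l then 1 else 0 := by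
  simp only [pbracket, Xmat, Ymat, pderiv_X, Pi.single_apply]
  simp only [Sum.inl.injEq, Sum.inr.injEq, reduceCtorEq, if_false, Prod.mk.injEq, zero_mul,
    sub_zero]
  by_cases h : a = m ∧ b = l
  · obtain ⟨rfl, rfl⟩ := h
    rw [Finset.sum_eq_single a, Finset.sum_eq_single b] <;> simp +contextual [eq_comm]
  · rw [if_neg h]
    refine Finset.sum_eq_zero fun j _ => Finset.sum_eq_zero fun k _ => ?_
    split_ifs <;> simp_all

theorem pbracket_Xmat_Xmat (a b l m : Fin n) : pbracket (Xmat n a b) (Xmat n l m) = 0 := by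
  simp [pbracket, Xmat, pderiv_X, Pi.single_apply]

theorem pbracket_Ymat_Ymat (a b l m : Fin n) : pbracket (Ymat n a b) (Ymat n l m) = 0 := by
  simp [pbracket, Ymat, pderiv_X, Pi.single_apply]

theorem Amat_apply (a b : Fin n) :
    Amat n a b = Xmat n a b - C ((n : ℂ)⁻¹) * (if a = b then trace (Xmat n) else 0) := by
  simp [Amat, Matrix.one_apply]

theorem Bmat_apply (a b : Fin n) :
    Bmat n a b = Ymat n a b - C ((n : ℂ)⁻¹) * (if a = b then trace (Ymat n) else 0) := by
  simp [Bmat, Matrix.one_apply]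

theorem C_inv_mul_natCast (hn : 1 ≤ n) : (C ((n : ℂ)⁻¹) : PolyFun n) * (n : PolyFun n) = 1 := by
  have : (n : PolyFun n) = C (n : ℂ) := (map_natCast C n).symm
  rw [this, ← C_mul, inv_mul_cancel₀ (by exact_mod_cast (by omega : n ≠ 0)), C_1]

theorem trace_Amat (hn : 1 ≤ n) : trace (Amat n) = 0 := by
  rw [Amat, trace_sub, trace_smul, trace_one, smul_eq_mul, Fintype.card_fin]
  linear_combination -trace (Xmat n) * C_inv_mul_natCast hn

theorem trace_Bmat (hn : 1 ≤ n) : trace (Bmat n) = 0 := by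
  rw [Bmat, trace_sub, trace_smul, trace_one, smul_eq_mul, Fintype.card_fin]
  linear_combination -trace (Ymat n) * C_inv_mul_natCast hn

theorem pbracket_trace_right (F : PolyFun n) (U : Matrix (Fin n) (Fin n) (PolyFun n)) :
    pbracket F (trace U) = ∑ i, pbracket F (U i i) := by
  simp only [trace, ← ham_apply, map_sum, diag_apply]

theorem pbracket_Amat_right (F : PolyFun n) (l m : Fin n) :
    pbracket F (Amat n l m) = pbracket F (Xmat n l m)
      - C ((n : ℂ)⁻¹) * (if l = m then ∑ i, pbracket F (Xmat n i i) else 0) := by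
  rw [Amat_apply, pbracket_sub_right, pbracket_mul_right, pbracket_C_right]
  split_ifs <;> simp [pbracket_trace_right, pbracket_zero_right]

theorem pbracket_Bmat_right (F : PolyFun n) (l m : Fin n) :
    pbracket F (Bmat n l m) = pbracket F (Ymat n l m)
      - C ((n : ℂ)⁻¹) * (if l = m then ∑ i, pbracket F (Ymat n i i) else 0) := by
  rw [Bmat_apply, pbracket_sub_right, pbracket_mul_right, pbracket_C_right]
  split_ifs <;> simp [pbracket_trace_right, pbracket_zero_right]

theorem pbracket_Amat_Amat (a b l m : Fin n) : pbracket (Amat n a b) (Amat n l m) = 0 := by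
  have h : ∀ i j, pbracket (Amat n a b) (Xmat n i j) = 0 := fun i j => by
    rw [pbracket_antisymm, pbracket_Amat_right]
    simp [pbracket_Xmat_Xmat]
  rw [pbracket_Amat_right]
  simp [h]

theorem pbracket_Bmat_Bmat (a b l m : Fin n) : pbracket (Bmat n a b) (Bmat n l m) = 0 := by
  have h : ∀ i j, pbracket (Bmat n a b) (Ymat n i j) = 0 := fun i j => by
    rw [pbracket_antisymm, pbracket_Bmat_right]
    simp [pbracket_Ymat_Ymat]
  rw [pbracket_Bmat_right]
  simp [h]

theorem pbracket_Amat_Bmat (hn : 1 ≤ n) (a b l m : Fin n) :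
    pbracket (Amat n a b) (Bmat n l m) = (if a = m ∧ b = l then 1 else 0)
      - C ((n : ℂ)⁻¹) * (if a = b ∧ l = m then 1 else 0) := by
  have hX : ∀ a b, pbracket (Bmat n l m) (Xmat n a b) = -((if a = m ∧ b = l then 1 else 0)
      - C ((n : ℂ)⁻¹) * (if a = b ∧ l = m then 1 else 0)) := fun a b => by
    rw [pbracket_antisymm, pbracket_Bmat_right]
    simp only [pbracket_Xmat_Ymat]
    congr 3
    by_cases hlm : l = m <;> by_cases hab : a = b <;> simp [hlm, hab, Finset.sum_ite_eq, ite_and]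
    exact Ne.symm hab
  have hsum : ∑ i, pbracket (Bmat n l m) (Xmat n i i) = 0 := by
    simp only [hX]
    by_cases hlm : l = m
    · subst hlm
      simp only [and_self, Finset.sum_neg_distrib, Finset.sum_sub_distrib, Finset.sum_ite_eq',
        Finset.mem_univ, if_true, Finset.sum_const, Finset.card_univ, Fintype.card_fin,
        nsmul_eq_mul, mul_one]
      linear_combination C_inv_mul_natCast hn
    · refine Finset.sum_eq_zero fun i _ => ?_
      have : ¬ (i = m ∧ i = l) := fun h => hlm (h.2.symm.trans h.1)
      simp [hlm, this]
  rw [pbracket_antisymm, pbracket_Amat_right, hsum, hX]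
  simp

theorem map_ham_Amat_Bmat (hn : 1 ≤ n) (a b : Fin n) :
    (Bmat n).map (ham (Amat n a b)) =
      Matrix.single b a 1 - (C ((n : ℂ)⁻¹) * (1 : Matrix (Fin n) (Fin n) (PolyFun n)) a b) • 1 := by
  ext1 l m
  rw [Matrix.map_apply, ham_apply, pbracket_Amat_Bmat hn]
  simp only [Matrix.sub_apply, Matrix.smul_apply, Matrix.single_apply, Matrix.one_apply, ite_and,
    smul_eq_mul, mul_ite, mul_one, mul_zero]
  congr 1 <;> split_ifs <;> simp_all

theorem map_ham_Bmat_Amat (hn : 1 ≤ n) (l m : Fin n) :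
    (Amat n).map (ham (Bmat n l m)) =
      -(Matrix.single m l 1
        - (C ((n : ℂ)⁻¹) * (1 : Matrix (Fin n) (Fin n) (PolyFun n)) l m) • 1) := by
  ext1 a b
  rw [Matrix.map_apply, ham_apply, pbracket_antisymm, pbracket_Amat_Bmat hn]
  simp only [Matrix.neg_apply, Matrix.sub_apply, Matrix.smul_apply, Matrix.single_apply,
    Matrix.one_apply, ite_and, smul_eq_mul, mul_ite, mul_one, mul_zero]
  congr 2
  split_ifs <;> simp_all

theorem map_ham_Amat_Amat (a b : Fin n) : (Amat n).map (ham (Amat n a b)) = 0 := by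
  ext1 l m
  rw [Matrix.map_apply, ham_apply, pbracket_Amat_Amat, Matrix.zero_apply]

theorem map_ham_Bmat_Bmat (a b : Fin n) : (Bmat n).map (ham (Bmat n a b)) = 0 := by
  ext1 l m
  rw [Matrix.map_apply, ham_apply, pbracket_Bmat_Bmat, Matrix.zero_apply]

theorem trace_mul_single_sub (U : Matrix (Fin n) (Fin n) (PolyFun n)) (a b : Fin n)
    (c : PolyFun n) :
    trace (U * (Matrix.single b a 1 - c • (1 : Matrix (Fin n) (Fin n) (PolyFun n)))) =
      U a b - c * trace U := by
  rw [mul_sub, trace_sub, Matrix.mul_smul, mul_one, trace_smul, trace_mul_single, smul_eq_mul]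
  simp

theorem map_ham_trace_Amat_pow_Amat (k : ℕ) :
    (Amat n).map (ham (trace (Amat n ^ k))) = 0 := by
  ext1 l m
  rw [Matrix.map_apply, ham_apply, pbracket_antisymm, ← ham_apply, derivation_trace_pow,
    map_ham_Amat_Amat]
  simp

theorem map_ham_trace_Amat_pow_Bmat (hn : 1 ≤ n) (k : ℕ) :
    (Bmat n).map (ham (trace (Amat n ^ k))) = (k : PolyFun n) • (Amat n ^ (k - 1)
      - (C ((n : ℂ)⁻¹) * trace (Amat n ^ (k - 1))) • 1) := by
  ext1 l m
  rw [Matrix.map_apply, ham_apply, pbracket_antisymm, ← ham_apply, derivation_trace_pow,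
    map_ham_Bmat_Amat hn, mul_neg, trace_neg, trace_mul_single_sub]
  simp only [Matrix.smul_apply, Matrix.sub_apply, smul_eq_mul, nsmul_eq_mul]
  ring

theorem map_ham_trace_Bmat_sq_Amat (hn : 1 ≤ n) :
    (Amat n).map (ham (trace (Bmat n ^ 2))) = (-2 : PolyFun n) • Bmat n := by
  ext1 a b
  rw [Matrix.map_apply, ham_apply, pbracket_antisymm, ← ham_apply, derivation_trace_pow,
    map_ham_Amat_Bmat hn, trace_mul_single_sub]
  simp [trace_Bmat hn]

theorem map_ham_trace_Bmat_sq_Bmat :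
    (Bmat n).map (ham (trace (Bmat n ^ 2))) = 0 := by
  ext1 l m
  rw [Matrix.map_apply, ham_apply, pbracket_antisymm, ← ham_apply, derivation_trace_pow,
    map_ham_Bmat_Bmat]
  simp

theorem map_ham_trace_Amat_mul_Bmat_Amat (hn : 1 ≤ n) :
    (Amat n).map (ham (trace (Amat n * Bmat n))) = -Amat n := by
  ext1 a b
  rw [Matrix.map_apply, ham_apply, pbracket_antisymm, ← ham_apply, derivation_trace,
    derivation_map_mul, map_ham_Amat_Amat, map_ham_Amat_Bmat hn, zero_mul, zero_add,
    trace_mul_single_sub]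
  simp [trace_Amat hn]

theorem map_ham_trace_Amat_mul_Bmat_Bmat (hn : 1 ≤ n) :
    (Bmat n).map (ham (trace (Amat n * Bmat n))) = Bmat n := by
  ext1 a b
  rw [Matrix.map_apply, ham_apply, pbracket_antisymm, ← ham_apply, derivation_trace,
    derivation_map_mul, map_ham_Bmat_Bmat, map_ham_Bmat_Amat hn, mul_zero, add_zero,
    trace_mul_comm, mul_neg, trace_neg, trace_mul_single_sub]
  simp [trace_Bmat hn]

end TraceBrackets

/-! ### The moment map and functions commuting with it -/

section MomentMap

variable {n : ℕ}

/-- The matrix `[A, B] - i` of polynomial functions, which has rank one on `Ŝ_n`. -/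
noncomputable def Mmat (n : ℕ) : Matrix (Fin n) (Fin n) (PolyFun n) :=
  Amat n * Bmat n - Bmat n * Amat n - (C Complex.I : PolyFun n) • 1

/-- The ideal generated by the `2 × 2` minors of `[A, B] - i`. -/
noncomputable def minorIdeal (n : ℕ) : Ideal (PolyFun n) :=
  Ideal.span {F | ∃ i j k l, F = Mmat n i j * Mmat n k l - Mmat n i l * Mmat n k j}

/-- `h` Poisson commutes with all entries of the moment map. -/
def MomentInvariant (h : PolyFun n) : Prop := ∀ i j, pbracket h (Mmat n i j) = 0

theorem minorIdeal_evalP {F : PolyFun n} (hF : F ∈ minorIdeal n)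
    {P : Matrix (Fin n) (Fin n) ℂ × Matrix (Fin n) (Fin n) ℂ} (hP : P ∈ Shat n) :
    evalP P.1 P.2 F = 0 := by
  obtain ⟨hX, hY, hrank⟩ := hP
  set e : PolyFun n →+* ℂ :=
    MvPolynomial.eval (Sum.elim (fun p => P.1 p.1 p.2) (fun p => P.2 p.1 p.2)) with he
  have hA : (Amat n).map e = P.1 := by
    ext i j
    rw [Matrix.map_apply, Amat_apply]
    have : e (trace (Xmat n)) = 0 := by
      rw [← hX]
      simp [trace, he, Xmat]
    split_ifs <;> simp [this] <;> simp [he, Xmat]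
  have hB : (Bmat n).map e = P.2 := by
    ext i j
    rw [Matrix.map_apply, Bmat_apply]
    have : e (trace (Ymat n)) = 0 := by
      rw [← hY]
      simp [trace, he, Ymat]
    split_ifs <;> simp [this] <;> simp [he, Ymat]
  set N := P.1 * P.2 - P.2 * P.1 - Complex.I • (1 : Matrix (Fin n) (Fin n) ℂ) with hN
  have hM : ∀ i j, e (Mmat n i j) = N i j := by
    intro i j
    rw [← Matrix.map_apply (f := e), hN]
    refine congrFun (congrFun ?_ i) j
    rw [Mmat, ← hA, ← hB]
    ext a b
    simp [Matrix.mul_apply, Matrix.one_apply]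
    split_ifs <;> simp [he]
  rw [Matrix.rank, finrank_eq_one_iff'] at hrank
  obtain ⟨⟨v, hv⟩, -, hspan⟩ := hrank
  have hcol : ∀ j, ∃ c : ℂ, ∀ i, N i j = c * v i := by
    intro j
    obtain ⟨c, hc⟩ := hspan ⟨N.mulVecLin (Pi.single j 1), LinearMap.mem_range_self _ _⟩
    refine ⟨c, fun i => ?_⟩
    have := congrArg (fun w => w.1 i) hc
    simpa using this.symm
  choose c hc using hcol
  have hle : minorIdeal n ≤ RingHom.ker e := by
    refine Ideal.span_le.mpr ?_
    rintro _ ⟨i, j, k, l, rfl⟩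
    simp only [SetLike.mem_coe, RingHom.mem_ker, map_sub, map_mul, hM, hc]
    ring
  exact hle hF

theorem MomentInvariant.pbracket_mem {h F : PolyFun n} (hh : MomentInvariant h)
    (hF : F ∈ minorIdeal n) : pbracket h F ∈ minorIdeal n := by
  induction hF using Submodule.span_induction with
  | mem x hx =>
    obtain ⟨i, j, k, l, rfl⟩ := hx
    rw [pbracket_sub_right, pbracket_mul_right, pbracket_mul_right]
    simp [hh _ _]
  | zero => simp [pbracket_zero_right]
  | add x y _ _ hx hy =>
    rw [pbracket_add_right]
    exact add_mem hx hy
  | smul a x hxm hx =>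
    rw [smul_eq_mul, pbracket_mul_right]
    exact add_mem (Ideal.mul_mem_left _ _ hx) (Ideal.mul_mem_right _ _ hxm)

theorem MomentInvariant.of_map {h : PolyFun n}
    (hh : (Amat n * Bmat n - Bmat n * Amat n).map (ham h) = 0) : MomentInvariant h := by
  intro i j
  have h1 := congrFun (congrFun hh i) j
  rw [Matrix.map_apply, ham_apply, Matrix.zero_apply] at h1
  rw [Mmat, Matrix.sub_apply, pbracket_sub_right, h1, Matrix.smul_apply, Matrix.one_apply]
  split_ifs <;> simp [pbracket_C_right, pbracket_zero_right]

theorem map_ham_commutator (h : PolyFun n) :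
    (Amat n * Bmat n - Bmat n * Amat n).map (ham h) =
      (Amat n).map (ham h) * Bmat n + Amat n * (Bmat n).map (ham h)
        - ((Bmat n).map (ham h) * Amat n + Bmat n * (Amat n).map (ham h)) := by
  rw [← derivation_map_mul, ← derivation_map_mul]
  ext1 i j
  simp

theorem momentInvariant_trace_Amat_pow (hn : 1 ≤ n) (k : ℕ) :
    MomentInvariant (trace (Amat n ^ k)) := by
  refine .of_map ?_
  rw [map_ham_commutator, map_ham_trace_Amat_pow_Amat, map_ham_trace_Amat_pow_Bmat hn,
    Matrix.mul_smul, Matrix.smul_mul, mul_sub, sub_mul, Matrix.mul_smul, Matrix.smul_mul, mul_one,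
    one_mul, ← pow_succ, ← pow_succ']
  simp

theorem momentInvariant_trace_Bmat_sq (hn : 1 ≤ n) : MomentInvariant (trace (Bmat n ^ 2)) := by
  refine .of_map ?_
  rw [map_ham_commutator, map_ham_trace_Bmat_sq_Amat hn, map_ham_trace_Bmat_sq_Bmat]
  simp

theorem momentInvariant_trace_Amat_mul_Bmat (hn : 1 ≤ n) :
    MomentInvariant (trace (Amat n * Bmat n)) := by
  refine .of_map ?_
  rw [map_ham_commutator, map_ham_trace_Amat_mul_Bmat_Amat hn, map_ham_trace_Amat_mul_Bmat_Bmat hn]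
  noncomm_ring

theorem MomentInvariant.mul {h₁ h₂ : PolyFun n} (h1 : MomentInvariant h₁)
    (h2 : MomentInvariant h₂) : MomentInvariant (h₁ * h₂) := fun i j => by
  rw [pbracket_mul_left, h1, h2]
  simp

theorem LieGen.momentInvariant (hn : 1 ≤ n) {g : PolyFun n} (hg : LieGen n (calF n) g) :
    MomentInvariant g := by
  induction hg with
  | base hf =>
    rcases hf with rfl | rfl | rfl | rfl
    · simpa [trAB] using momentInvariant_trace_Amat_pow hn 2
    · simpa [trAB] using momentInvariant_trace_Bmat_sq hn
    · simpa [trAB] using momentInvariant_trace_Amat_pow hn 3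
    · have := momentInvariant_trace_Amat_mul_Bmat hn
      rw [sq]
      simpa [trAB] using this.mul this
  | zero => exact fun i j => by rw [pbracket_antisymm, pbracket_zero_right, neg_zero]
  | add _ _ h1 h2 => exact fun i j => by rw [pbracket_add_left, h1, h2, add_zero]
  | @smul c f _ h =>
    intro i j
    rw [pbracket_antisymm, pbracket_smul_right, pbracket_antisymm _ f, h, neg_zero, smul_zero,
      neg_zero]
  | @bracket f g _ _ h1 h2 =>
    intro i j
    have := pbracket_jacobi f g (Mmat n i j)
    rw [h2, pbracket_antisymm (Mmat n i j) f, h1, neg_zero, pbracket_zero_right,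
      pbracket_zero_right, zero_add, zero_add, pbracket_antisymm] at this
    exact neg_eq_zero.mp this

end MomentMap

/-! ### Words in `A` and `B` and products of their traces -/

section Words

variable {n : ℕ}

/-- The product of the letters `A` (for `true`) and `B` (for `false`) of a word. -/
noncomputable def word (n : ℕ) (l : List Bool) : Matrix (Fin n) (Fin n) (PolyFun n) :=
  (l.map fun b => if b then Amat n else Bmat n).prod

theorem word_append (l₁ l₂ : List Bool) : word n (l₁ ++ l₂) = word n l₁ * word n l₂ := by
  simp [word]

theorem word_cons (b : Bool) (l : List Bool) :
    word n (b :: l) = (if b then Amat n else Bmat n) * word n l := by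
  simp [word]

theorem word_replicate_true (k : ℕ) : word n (List.replicate k true) = Amat n ^ k := by
  simp [word]

theorem word_replicate_false (k : ℕ) : word n (List.replicate k false) = Bmat n ^ k := by
  simp [word]

/-- The product of the functions `tr A^p B^q` over a list of pairs `(p, q)`. -/
noncomputable def traceProd (n : ℕ) (l : List (ℕ × ℕ)) : PolyFun n :=
  (l.map fun x => trAB n x.1 x.2).prod

/-- The total degree in `A` and `B` of a product of traces. -/
def traceDeg (l : List (ℕ × ℕ)) : ℕ := (l.map fun x => x.1 + x.2).sum

theorem traceProd_nil : traceProd n [] = 1 := rfl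

theorem traceProd_cons (p q : ℕ) (l : List (ℕ × ℕ)) :
    traceProd n ((p, q) :: l) = trAB n p q * traceProd n l := by
  simp [traceProd]

theorem traceProd_append (l₁ l₂ : List (ℕ × ℕ)) :
    traceProd n (l₁ ++ l₂) = traceProd n l₁ * traceProd n l₂ := by
  simp [traceProd]

theorem traceDeg_nil : traceDeg [] = 0 := rfl

theorem traceDeg_cons (p q : ℕ) (l : List (ℕ × ℕ)) :
    traceDeg ((p, q) :: l) = p + q + traceDeg l := by
  simp [traceDeg]

theorem traceDeg_append (l₁ l₂ : List (ℕ × ℕ)) :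
    traceDeg (l₁ ++ l₂) = traceDeg l₁ + traceDeg l₂ := by
  simp [traceDeg]

/-- Modulo the ideal of minors, the span of the products of traces which either have degree less
than `d`, or have degree `d` and at most `m` factors. -/
noncomputable def traceFil (n m d : ℕ) : Submodule ℂ (PolyFun n) :=
  Submodule.span ℂ {F | ∃ l, F = traceProd n l ∧
    (traceDeg l < d ∨ traceDeg l = d ∧ l.length ≤ m)} ⊔ (minorIdeal n).restrictScalars ℂ

theorem traceProd_mem_traceFil {m d : ℕ} {l : List (ℕ × ℕ)}
    (h : traceDeg l < d ∨ traceDeg l = d ∧ l.length ≤ m) : traceProd n l ∈ traceFil n m d :=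
  Submodule.mem_sup_left (Submodule.subset_span ⟨l, rfl, h⟩)

theorem minorIdeal_mem_traceFil {m d : ℕ} {F : PolyFun n} (h : F ∈ minorIdeal n) :
    F ∈ traceFil n m d :=
  Submodule.mem_sup_right h

theorem traceFil_le {m d : ℕ} {S : Submodule ℂ (PolyFun n)}
    (h : ∀ l, (traceDeg l < d ∨ traceDeg l = d ∧ l.length ≤ m) → traceProd n l ∈ S)
    (hJ : ∀ F ∈ minorIdeal n, F ∈ S) : traceFil n m d ≤ S := by
  refine sup_le (Submodule.span_le.mpr ?_) hJ
  rintro _ ⟨l, rfl, hl⟩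
  exact h l hl

theorem traceFil_mono {m m' d d' : ℕ} (h : d < d' ∨ d = d' ∧ m ≤ m') :
    traceFil n m d ≤ traceFil n m' d' := by
  refine traceFil_le (fun l hl => traceProd_mem_traceFil ?_) fun F hF => minorIdeal_mem_traceFil hF
  omega

theorem traceFil_mul {m m' d d' : ℕ} {F G : PolyFun n} (hF : F ∈ traceFil n m d)
    (hG : G ∈ traceFil n m' d') : F * G ∈ traceFil n (m + m') (d + d') := by
  obtain ⟨x, hx, j, hj, rfl⟩ := Submodule.mem_sup.mp hF
  obtain ⟨y, hy, k, hk, rfl⟩ := Submodule.mem_sup.mp hG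
  have hxy : x * y ∈ traceFil n (m + m') (d + d') := by
    refine Submodule.mem_sup_left ?_
    have := Submodule.mul_mem_mul hx hy
    rw [Submodule.span_mul_span] at this
    refine Submodule.span_mono ?_ this
    rintro _ ⟨_, ⟨l, rfl, hl⟩, _, ⟨l', rfl, hl'⟩, rfl⟩
    refine ⟨l ++ l', (traceProd_append l l').symm, ?_⟩
    rw [traceDeg_append, List.length_append]
    omega
  have hJ : x * k + j * (y + k) ∈ minorIdeal n :=
    add_mem (Ideal.mul_mem_left _ _ hk) (Ideal.mul_mem_right _ _ hj)
  have : (x + j) * (y + k) = x * y + (x * k + j * (y + k)) := by ring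
  rw [this]
  exact add_mem hxy (minorIdeal_mem_traceFil hJ)

theorem C_mul_mem {S : Submodule ℂ (PolyFun n)} (c : ℂ) {F : PolyFun n} (h : F ∈ S) :
    C c * F ∈ S := by
  rw [C_mul']
  exact S.smul_mem c h

theorem natCast_mul_mem {S : Submodule ℂ (PolyFun n)} (k : ℕ) {F : PolyFun n} (h : F ∈ S) :
    (k : PolyFun n) * F ∈ S := by
  rw [← map_natCast C k]
  exact C_mul_mem _ h

theorem mem_of_C_mul_mem {S : Submodule ℂ (PolyFun n)} {c : ℂ} (hc : c ≠ 0) {F : PolyFun n}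
    (h : C c * F ∈ S) : F ∈ S := by
  rw [C_mul'] at h
  exact (S.smul_mem_iff hc).mp h

theorem trAB_mem_traceFil (p q : ℕ) : trAB n p q ∈ traceFil n 1 (p + q) := by
  have := traceProd_mem_traceFil (n := n) (m := 1) (d := p + q) (l := [(p, q)])
    (Or.inr ⟨by simp [traceDeg], by simp⟩)
  simpa [traceProd] using this

section Minors

variable {R : Type*} [CommRing R] {ι : Type*} [Fintype ι]

theorem mul_mul_apply_sub_trace_mul (V Z : Matrix ι ι R) (i j : ι) :
    (Z * V * Z) i j - trace (V * Z) * Z i j =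
      ∑ b, ∑ c, V b c * (Z i b * Z c j - Z i j * Z c b) := by
  have h1 : (Z * V * Z) i j = ∑ b, ∑ c, V b c * (Z i b * Z c j) := by
    simp only [Matrix.mul_apply, Finset.sum_mul]
    rw [Finset.sum_comm]
    exact Finset.sum_congr rfl fun _ _ => Finset.sum_congr rfl fun _ _ => by ring
  have h2 : trace (V * Z) * Z i j = ∑ b, ∑ c, V b c * (Z i j * Z c b) := by
    simp only [Matrix.mul_apply, trace, diag_apply, Finset.sum_mul]
    exact Finset.sum_congr rfl fun _ _ => Finset.sum_congr rfl fun _ _ => by ring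
  simp only [h1, h2, mul_sub, Finset.sum_sub_distrib]

theorem trace_mul_sub_mul_trace (U N Z : Matrix ι ι R) (t : R) :
    trace (U * N) - trace (U * Z) * t = ∑ i, ∑ j, U i j * (N j i - t * Z j i) := by
  simp only [Matrix.mul_apply, trace, diag_apply, Finset.sum_mul, mul_sub, Finset.sum_sub_distrib]
  congr 1
  exact Finset.sum_congr rfl fun _ _ => Finset.sum_congr rfl fun _ _ => by ring

end Minors

/-- The rank one relation satisfied by `[A, B] - i` modulo its minors. -/
theorem trace_mul_Mmat_mul_Mmat (U V : Matrix (Fin n) (Fin n) (PolyFun n)) :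
    trace (U * Mmat n * V * Mmat n) - trace (U * Mmat n) * trace (V * Mmat n) ∈ minorIdeal n := by
  rw [mul_assoc U, mul_assoc U, trace_mul_sub_mul_trace]
  refine sum_mem fun i _ => sum_mem fun j _ => Ideal.mul_mem_left _ _ ?_
  rw [mul_mul_apply_sub_trace_mul]
  exact sum_mem fun b _ => sum_mem fun c _ =>
    Ideal.mul_mem_left _ _ (Ideal.subset_span ⟨j, b, c, i, rfl⟩)

theorem commutator_eq : Amat n * Bmat n - Bmat n * Amat n =
    Mmat n + (C Complex.I : PolyFun n) • (1 : Matrix (Fin n) (Fin n) (PolyFun n)) := by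
  rw [Mmat, sub_add_cancel]

/-- Reordering the letters of a word changes a trace by terms containing a commutator. -/
theorem trace_word_sub_mem_of_perm {S : Submodule ℂ (PolyFun n)}
    (Z : Matrix (Fin n) (Fin n) (PolyFun n)) {l₁ l₂ : List Bool} (h : l₁.Perm l₂) (pre : List Bool)
    (hS : ∀ U V : List Bool, U.length + V.length + 2 = pre.length + l₁.length →
      trace (word n U * (Amat n * Bmat n - Bmat n * Amat n) * word n V * Z) ∈ S) :
    trace (word n (pre ++ l₁) * Z) - trace (word n (pre ++ l₂) * Z) ∈ S := by
  induction h generalizing pre with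
  | nil =>
    rw [sub_self]
    exact zero_mem _
  | @cons x l₁ l₂ _ ih =>
    rw [List.append_cons pre x l₁, List.append_cons pre x l₂]
    refine ih _ fun U V hUV => hS U V ?_
    rw [hUV]
    simp only [List.length_append, List.length_cons, List.length_nil]
    omega
  | swap x y l =>
    have hmem := hS pre l (by simp only [List.length_cons]; omega)
    have heq : word n pre * (Amat n * Bmat n - Bmat n * Amat n) * word n l * Z =
        word n pre * (Amat n * (Bmat n * word n l)) * Z
          - word n pre * (Bmat n * (Amat n * word n l)) * Z := by
      simp only [mul_sub, sub_mul, mul_assoc]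
    rw [heq, trace_sub] at hmem
    cases x <;> cases y <;> simp only [word_append, word_cons, sub_self, zero_mem, if_true,
      Bool.false_eq_true, if_false]
    · exact hmem
    · simpa using neg_mem hmem
  | trans h₁ _ ih₁ ih₂ =>
    have := add_mem (ih₁ pre hS) (ih₂ pre fun U V hUV => hS U V (by rw [hUV, h₁.length_eq]))
    simpa using this

theorem perm_replicate_append_replicate (l : List Bool) :
    l.Perm (List.replicate (l.count true) true ++ List.replicate (l.count false) false) := by
  rw [List.perm_iff_count]
  intro b
  cases b <;> simp [List.count_replicate]

theorem count_true_add_count_false (l : List Bool) : l.count true + l.count false = l.length := by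
  induction l with
  | nil => rfl
  | cons b l ih => cases b <;> simp <;> omega

theorem trAB_mem_traceFil_of_lt {p q d : ℕ} (m : ℕ) (h : p + q < d) :
    trAB n p q ∈ traceFil n m d :=
  traceFil_mono (Or.inl h) (trAB_mem_traceFil p q)

/-- The trace of a word times `[A, B] - i` is a combination of products of traces of no larger
degree. -/
theorem trace_word_mul_Mmat_mem (l : List Bool) :
    trace (word n l * Mmat n) ∈ traceFil n 0 (l.length + 1) := by
  induction hL : l.length using Nat.strong_induction_on generalizing l with
  | _ L ih =>
  have hswap : ∀ U V : List Bool, U.length + V.length + 2 = L →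
      trace (word n U * (Amat n * Bmat n - Bmat n * Amat n) * word n V * Mmat n) ∈
        traceFil n 0 (L + 1) := by
    intro U V hUV
    have heq : trace (word n U * (Amat n * Bmat n - Bmat n * Amat n) * word n V * Mmat n) =
        (trace (word n U * Mmat n * word n V * Mmat n)
          - trace (word n U * Mmat n) * trace (word n V * Mmat n))
        + trace (word n U * Mmat n) * trace (word n V * Mmat n)
        + C Complex.I * trace (word n (U ++ V) * Mmat n) := by
      rw [commutator_eq, mul_add, add_mul, add_mul, trace_add, Matrix.mul_smul, mul_one,
        Matrix.smul_mul, Matrix.smul_mul, trace_smul, word_append, smul_eq_mul, sub_add_cancel]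
    rw [heq]
    refine add_mem (add_mem (minorIdeal_mem_traceFil (trace_mul_Mmat_mul_Mmat _ _)) ?_)
      (C_mul_mem _ ?_)
    · refine traceFil_mono ?_ (traceFil_mul (ih _ ?_ U rfl) (ih _ ?_ V rfl)) <;> omega
    · refine traceFil_mono ?_ (ih _ ?_ (U ++ V) rfl) <;> rw [List.length_append] <;> omega
  have hperm : ∀ l₁ l₂ : List Bool, l₁.Perm l₂ → l₁.length = L →
      trace (word n l₁ * Mmat n) - trace (word n l₂ * Mmat n) ∈ traceFil n 0 (L + 1) := by
    intro l₁ l₂ h hl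
    exact trace_word_sub_mem_of_perm _ h [] fun U V hUV => hswap U V (by simpa [hl] using hUV)
  set p := l.count true with hp
  set q := l.count false with hq
  have hpq : p + q = L := by rw [hp, hq, count_true_add_count_false, hL]
  set x := trace (Amat n ^ p * Bmat n ^ q * Mmat n) with hx
  have hword : word n (List.replicate p true ++ List.replicate q false) =
      Amat n ^ p * Bmat n ^ q := by
    rw [word_append, word_replicate_true, word_replicate_false]
  have hlx : trace (word n l * Mmat n) - x ∈ traceFil n 0 (L + 1) := by
    rw [hx, ← hword]
    exact hperm _ _ (perm_replicate_append_replicate l) hL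
  have ht : trAB n p q ∈ traceFil n 0 (L + 1) := trAB_mem_traceFil_of_lt 0 (by omega)
  have hy : ∀ a ∈ Finset.range q,
      trace (Bmat n ^ (q - a) * (Amat n ^ p * Bmat n ^ a) * Mmat n) - x ∈
        traceFil n 0 (L + 1) := by
    intro a ha
    have ha := Finset.mem_range.mp ha
    have hw : word n (List.replicate (q - a) false ++ (List.replicate p true ++
        List.replicate a false)) = Bmat n ^ (q - a) * (Amat n ^ p * Bmat n ^ a) := by
      rw [word_append, word_append, word_replicate_true, word_replicate_false,
        word_replicate_false]
    rw [hx, ← hword, ← hw]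
    refine hperm _ _ ?_ ?_
    · rw [List.perm_iff_count]
      intro b
      cases b <;> simp [List.count_replicate]
      omega
    · simp only [List.length_append, List.length_replicate]
      omega
  have hcomm : Bmat n ^ q * Amat n - Amat n * Bmat n ^ q =
      -∑ a ∈ Finset.range q,
        Bmat n ^ a * (Amat n * Bmat n - Bmat n * Amat n) * Bmat n ^ (q - 1 - a) := by
    rw [leibniz_map_pow (D := fun u => u * Amat n - Amat n * u)
      (fun u v => by noncomm_ring) (Bmat n) q, ← Finset.sum_neg_distrib]
    exact Finset.sum_congr rfl fun a _ => by noncomm_ring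
  have hcyc : x + C Complex.I * trAB n p q =
      -∑ a ∈ Finset.range q, (trace (Bmat n ^ (q - a) * (Amat n ^ p * Bmat n ^ a) * Mmat n)
        + C Complex.I * trAB n p q) := by
    have h1 : x + C Complex.I * trAB n p q =
        trace (Amat n ^ p * Bmat n ^ q * (Amat n * Bmat n - Bmat n * Amat n)) := by
      rw [commutator_eq, mul_add, trace_add, Matrix.mul_smul, mul_one, trace_smul, smul_eq_mul,
        trAB]
    have h2 : trace (Amat n ^ p * Bmat n ^ q * (Amat n * Bmat n - Bmat n * Amat n)) =
        trace (Amat n ^ p * (Bmat n ^ q * Amat n - Amat n * Bmat n ^ q) * Bmat n) := by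
      have h3 : trace (Amat n ^ p * Bmat n ^ q * (Bmat n * Amat n)) =
          trace (Amat n ^ p * (Amat n * Bmat n ^ q) * Bmat n) := by
        rw [← mul_assoc, trace_mul_comm]
        simp only [← mul_assoc]
        rw [← pow_succ, ← pow_succ']
      rw [mul_sub, trace_sub, h3, mul_sub, sub_mul, trace_sub]
      simp only [mul_assoc]
    rw [h1, h2, hcomm, mul_neg, neg_mul, trace_neg, Finset.mul_sum, Finset.sum_mul, trace_sum]
    congr 1
    refine Finset.sum_congr rfl fun a ha => ?_
    have ha := Finset.mem_range.mp ha
    have h4 : trace (Amat n ^ p * (Bmat n ^ a * (Amat n * Bmat n - Bmat n * Amat n)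
        * Bmat n ^ (q - 1 - a)) * Bmat n) =
        trace (Bmat n ^ (q - a) * (Amat n ^ p * Bmat n ^ a)
          * (Amat n * Bmat n - Bmat n * Amat n)) := by
      have : q - a = q - 1 - a + 1 := by omega
      rw [this, pow_succ, mul_assoc (_ * _) (Amat n ^ p * _), trace_mul_comm (_ * Bmat n)]
      simp only [mul_assoc]
    have h5 : trAB n p q = trace (Bmat n ^ (q - a) * (Amat n ^ p * Bmat n ^ a)) := by
      rw [trace_mul_comm, mul_assoc, ← pow_add, Nat.add_sub_cancel' ha.le, trAB]
    rw [h4, commutator_eq, mul_add, trace_add, Matrix.mul_smul, mul_one, trace_smul, smul_eq_mul,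
      h5]
  have hqx : C ((q : ℂ) + 1) * x ∈ traceFil n 0 (L + 1) := by
    have heq : C ((q : ℂ) + 1) * x =
        -(∑ a ∈ Finset.range q,
          (trace (Bmat n ^ (q - a) * (Amat n ^ p * Bmat n ^ a) * Mmat n) - x))
        - C (((q : ℂ) + 1) * Complex.I) * trAB n p q := by
      rw [Finset.sum_sub_distrib, Finset.sum_const, Finset.card_range, nsmul_eq_mul]
      rw [Finset.sum_add_distrib, Finset.sum_const, Finset.card_range, nsmul_eq_mul] at hcyc
      simp only [map_add, map_mul, map_natCast, map_one]
      linear_combination hcyc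
    rw [heq]
    exact sub_mem (neg_mem (sum_mem hy)) (C_mul_mem _ ht)
  have := add_mem hlx (mem_of_C_mul_mem (by exact_mod_cast q.succ_ne_zero) hqx)
  rwa [sub_add_cancel] at this

/-- The trace of a word depends, up to products of traces of lower degree, only on the number of
occurrences of each letter. -/
theorem trace_word_sub_trAB_mem (l : List Bool) :
    trace (word n l) - trAB n (l.count true) (l.count false) ∈ traceFil n 0 l.length := by
  induction hL : l.length using Nat.strong_induction_on generalizing l with
  | _ L ih =>
  have hword : trAB n (l.count true) (l.count false) = trace (word n ([] ++
      (List.replicate (l.count true) true ++ List.replicate (l.count false) false)) * 1) := by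
    rw [List.nil_append, word_append, word_replicate_true, word_replicate_false, mul_one, trAB]
  rw [hword, ← mul_one (word n l)]
  refine trace_word_sub_mem_of_perm 1 (perm_replicate_append_replicate l) [] fun U V hUV => ?_
  rw [List.length_nil, zero_add, hL] at hUV
  have heq : trace (word n U * (Amat n * Bmat n - Bmat n * Amat n) * word n V * 1) =
      trace (word n (V ++ U) * Mmat n) + C Complex.I * trace (word n (U ++ V)) := by
    rw [commutator_eq, mul_add, add_mul, mul_one, trace_add, Matrix.mul_smul, mul_one,
      Matrix.smul_mul, trace_smul, word_append, word_append, smul_eq_mul, trace_mul_comm,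
      mul_assoc (word n V)]
  rw [heq]
  refine add_mem (traceFil_mono ?_ (trace_word_mul_Mmat_mem (V ++ U))) (C_mul_mem _ ?_)
  · rw [List.length_append]
    omega
  · have hlen : (U ++ V).length < L := by
      rw [List.length_append]
      omega
    have := add_mem (traceFil_mono (Or.inl hlen) (ih _ hlen (U ++ V) rfl))
      (trAB_mem_traceFil_of_lt (n := n) 0 ((count_true_add_count_false (U ++ V)).trans_lt hlen))
    rwa [sub_add_cancel] at this

end Words

/-! ### Brackets of products of traces -/

section BracketFormulas

variable {n : ℕ}

theorem pbracket_eq_trace_of_map_Amat_eq_zero {h : PolyFun n} (hA : (Amat n).map (ham h) = 0)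
    (p q : ℕ) : pbracket h (trAB n p q) = ∑ a ∈ Finset.range q,
      trace (Amat n ^ p * (Bmat n ^ a * (Bmat n).map (ham h) * Bmat n ^ (q - 1 - a))) := by
  rw [← ham_apply, trAB, derivation_trace, derivation_map_mul]
  rw [leibniz_map_pow (D := fun V => V.map (ham h)) (derivation_map_mul _) (Amat n),
    leibniz_map_pow (D := fun V => V.map (ham h)) (derivation_map_mul _) (Bmat n)]
  simp only [hA, mul_zero, zero_mul, Finset.sum_const_zero, zero_add, Finset.mul_sum, trace_sum]

theorem pbracket_eq_trace_of_map_Bmat_eq_zero {h : PolyFun n} (hB : (Bmat n).map (ham h) = 0)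
    (p q : ℕ) : pbracket h (trAB n p q) = ∑ a ∈ Finset.range p,
      trace (Amat n ^ a * (Amat n).map (ham h) * Amat n ^ (p - 1 - a) * Bmat n ^ q) := by
  rw [← ham_apply, trAB, derivation_trace, derivation_map_mul]
  rw [leibniz_map_pow (D := fun V => V.map (ham h)) (derivation_map_mul _) (Amat n),
    leibniz_map_pow (D := fun V => V.map (ham h)) (derivation_map_mul _) (Bmat n)]
  simp only [hB, mul_zero, zero_mul, Finset.sum_const_zero, add_zero, Finset.sum_mul, trace_sum]

theorem trAB_zero_right (p : ℕ) : trAB n p 0 = trace (Amat n ^ p) := by simp [trAB]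

theorem trAB_zero_left (q : ℕ) : trAB n 0 q = trace (Bmat n ^ q) := by simp [trAB]

theorem trAB_zero_zero : trAB n 0 0 = (n : PolyFun n) := by simp [trAB]

theorem trAB_eq_zero (hn : 1 ≤ n) {p q : ℕ} (h : p + q = 1) : trAB n p q = 0 := by
  obtain ⟨rfl, rfl⟩ | ⟨rfl, rfl⟩ : p = 1 ∧ q = 0 ∨ p = 0 ∧ q = 1 := by omega
  · rw [trAB_zero_right, pow_one, trace_Amat hn]
  · rw [trAB_zero_left, pow_one, trace_Bmat hn]

/-- The bracket of `tr A^(j+2)` with `tr A^p B^q`, up to products of traces of lower degree. -/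
theorem pbracket_trA_trAB (hn : 1 ≤ n) (j p q : ℕ) :
    pbracket (trAB n (j + 2) 0) (trAB n p q)
      + C ((n : ℂ)⁻¹) * ((j + 2 : ℕ) : PolyFun n) * trAB n (j + 1) 0
        * ((q : PolyFun n) * trAB n p (q - 1))
      - ((j + 2 : ℕ) : PolyFun n) * ((q : PolyFun n) * trAB n (p + j + 1) (q - 1))
      ∈ traceFil n 0 (p + q + j) := by
  rw [trAB_zero_right, pbracket_eq_trace_of_map_Amat_eq_zero (map_ham_trace_Amat_pow_Amat _),
    map_ham_trace_Amat_pow_Bmat hn]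
  have hterm : ∀ a ∈ Finset.range q,
      trace (Amat n ^ p * (Bmat n ^ a * (((j + 2 : ℕ) : PolyFun n) • (Amat n ^ (j + 2 - 1)
        - (C ((n : ℂ)⁻¹) * trace (Amat n ^ (j + 2 - 1))) • 1)) * Bmat n ^ (q - 1 - a)))
      + C ((n : ℂ)⁻¹) * ((j + 2 : ℕ) : PolyFun n) * trAB n (j + 1) 0 * trAB n p (q - 1)
      - ((j + 2 : ℕ) : PolyFun n) * trAB n (p + j + 1) (q - 1) ∈ traceFil n 0 (p + q + j) := by
    intro a ha
    have ha := Finset.mem_range.mp ha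
    set l := List.replicate p true ++ (List.replicate a false ++
      (List.replicate (j + 1) true ++ List.replicate (q - 1 - a) false)) with hl
    have hw : word n l = Amat n ^ p * (Bmat n ^ a * (Amat n ^ (j + 1) * Bmat n ^ (q - 1 - a))) := by
      simp only [hl, word_append, word_replicate_true, word_replicate_false]
    have hmem := trace_word_sub_trAB_mem (n := n) l
    have hct : l.count true = p + j + 1 := by
      simp [hl, List.count_replicate]
      omega
    have hcf : l.count false = q - 1 := by
      simp [hl, List.count_replicate]
      omega
    have hlen : l.length = p + q + j := by
      rw [← count_true_add_count_false, hct, hcf]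
      omega
    rw [hct, hcf, hlen, hw] at hmem
    have heq : trace (Amat n ^ p * (Bmat n ^ a * (((j + 2 : ℕ) : PolyFun n) • (Amat n ^ (j + 2 - 1)
        - (C ((n : ℂ)⁻¹) * trace (Amat n ^ (j + 2 - 1))) • 1)) * Bmat n ^ (q - 1 - a))) =
        ((j + 2 : ℕ) : PolyFun n) *
          (trace (Amat n ^ p * (Bmat n ^ a * (Amat n ^ (j + 1) * Bmat n ^ (q - 1 - a))))
          - C ((n : ℂ)⁻¹) * trAB n (j + 1) 0 * trAB n p (q - 1)) := by
      have hpow : Bmat n ^ (q - 1) = Bmat n ^ a * Bmat n ^ (q - 1 - a) := by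
        rw [← pow_add]
        congr 1
        omega
      rw [trAB_zero_right, trAB, hpow, show j + 2 - 1 = j + 1 from rfl, Matrix.mul_smul,
        Matrix.smul_mul, Matrix.mul_smul, trace_smul, mul_sub, sub_mul, mul_sub, trace_sub,
        Matrix.mul_smul, Matrix.smul_mul, Matrix.mul_smul, trace_smul, mul_one, smul_eq_mul,
        smul_eq_mul]
      simp only [mul_assoc]
    rw [heq]
    have heq' : ((j + 2 : ℕ) : PolyFun n) *
          (trace (Amat n ^ p * (Bmat n ^ a * (Amat n ^ (j + 1) * Bmat n ^ (q - 1 - a))))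
          - C ((n : ℂ)⁻¹) * trAB n (j + 1) 0 * trAB n p (q - 1))
        + C ((n : ℂ)⁻¹) * ((j + 2 : ℕ) : PolyFun n) * trAB n (j + 1) 0 * trAB n p (q - 1)
        - ((j + 2 : ℕ) : PolyFun n) * trAB n (p + j + 1) (q - 1) =
        ((j + 2 : ℕ) : PolyFun n) *
          (trace (Amat n ^ p * (Bmat n ^ a * (Amat n ^ (j + 1) * Bmat n ^ (q - 1 - a))))
          - trAB n (p + j + 1) (q - 1)) := by ring
    rw [heq']
    exact natCast_mul_mem _ hmem
  have hsum := sum_mem hterm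
  rw [Finset.sum_sub_distrib, Finset.sum_add_distrib, Finset.sum_const, Finset.sum_const,
    Finset.card_range, nsmul_eq_mul, nsmul_eq_mul] at hsum
  convert hsum using 2 <;> ring

/-- The bracket of `tr B²` with `tr A^p B^q`, up to products of traces of lower degree. -/
theorem pbracket_trB_sq_trAB (hn : 1 ≤ n) (p q : ℕ) :
    pbracket (trAB n 0 2) (trAB n p q) + 2 * ((p : PolyFun n) * trAB n (p - 1) (q + 1))
      ∈ traceFil n 0 (p + q) := by
  rw [trAB_zero_left, pbracket_eq_trace_of_map_Bmat_eq_zero map_ham_trace_Bmat_sq_Bmat,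
    map_ham_trace_Bmat_sq_Amat hn]
  have hterm : ∀ a ∈ Finset.range p,
      trace (Amat n ^ a * ((-2 : PolyFun n) • Bmat n) * Amat n ^ (p - 1 - a) * Bmat n ^ q)
        + 2 * trAB n (p - 1) (q + 1) ∈ traceFil n 0 (p + q) := by
    intro a ha
    have ha := Finset.mem_range.mp ha
    set l := List.replicate a true ++ (List.replicate 1 false ++
      (List.replicate (p - 1 - a) true ++ List.replicate q false)) with hl
    have hw : word n l = Amat n ^ a * (Bmat n * (Amat n ^ (p - 1 - a) * Bmat n ^ q)) := by
      simp only [hl, word_append, word_replicate_true, word_replicate_false, pow_one]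
    have hmem := trace_word_sub_trAB_mem (n := n) l
    have hct : l.count true = p - 1 := by
      simp [hl, List.count_replicate]
      omega
    have hcf : l.count false = q + 1 := by
      simp [hl, List.count_replicate]
    have hlen : l.length = p + q := by
      rw [← count_true_add_count_false, hct, hcf]
      omega
    rw [hct, hcf, hlen, hw] at hmem
    have heq : trace (Amat n ^ a * ((-2 : PolyFun n) • Bmat n) * Amat n ^ (p - 1 - a) * Bmat n ^ q)
        + 2 * trAB n (p - 1) (q + 1) = C (-2) *
          (trace (Amat n ^ a * (Bmat n * (Amat n ^ (p - 1 - a) * Bmat n ^ q)))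
          - trAB n (p - 1) (q + 1)) := by
      rw [Matrix.mul_smul, Matrix.smul_mul, Matrix.smul_mul, trace_smul, smul_eq_mul]
      simp only [mul_assoc, map_neg, map_ofNat]
      ring
    rw [heq]
    exact C_mul_mem _ hmem
  have hsum := sum_mem hterm
  rw [Finset.sum_add_distrib, Finset.sum_const, Finset.card_range, nsmul_eq_mul] at hsum
  convert hsum using 2
  ring

theorem pbracket_trAB_one_one_trA (hn : 1 ≤ n) (k : ℕ) :
    pbracket (trAB n 1 1) (trAB n k 0) = -((k : PolyFun n) * trAB n k 0) := by
  rw [trAB_zero_right, ← ham_apply, derivation_trace_pow, trAB, pow_one, pow_one,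
    map_ham_trace_Amat_mul_Bmat_Amat hn, mul_neg, trace_neg, nsmul_eq_mul]
  rcases k with _ | k
  · simp
  · rw [Nat.add_sub_cancel, ← pow_succ, mul_neg]

theorem pbracket_trA_trA (j k : ℕ) : pbracket (trAB n j 0) (trAB n k 0) = 0 := by
  rw [trAB_zero_right, trAB_zero_right, ← ham_apply, derivation_trace_pow,
    map_ham_trace_Amat_pow_Amat]
  simp

/-- The derivation `tr A^p B^q ↦ q tr A^p B^(q-1)`, evaluated on a product of traces. -/
noncomputable def shiftB (n : ℕ) : List (ℕ × ℕ) → PolyFun n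
  | [] => 0
  | (p, q) :: l => (q : PolyFun n) * trAB n p (q - 1) * traceProd n l + trAB n p q * shiftB n l

/-- The total degree in `B` of a product of traces. -/
def degB (l : List (ℕ × ℕ)) : ℕ := (l.map fun x => x.2).sum

theorem mul_shiftB_mem {S : Submodule ℂ (PolyFun n)} (l : List (ℕ × ℕ)) (c : PolyFun n)
    (h : ∀ l' : List (ℕ × ℕ), l'.length = l.length → traceDeg l' + 1 = traceDeg l →
      degB l' + 1 = degB l → c * traceProd n l' ∈ S) : c * shiftB n l ∈ S := by
  induction l generalizing c with
  | nil =>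
    rw [shiftB, mul_zero]
    exact zero_mem S
  | cons x l ih =>
    obtain ⟨p, q⟩ := x
    rw [shiftB, mul_add]
    refine add_mem ?_ ?_
    · rcases q with _ | q
      · rw [Nat.cast_zero, zero_mul, zero_mul, mul_zero]
        exact zero_mem S
      · have := h ((p, q) :: l) (by simp) (by simp only [traceDeg_cons]; omega)
          (by simp only [degB, List.map_cons, List.sum_cons]; omega)
        rw [traceProd_cons] at this
        rw [Nat.add_sub_cancel, mul_assoc, mul_left_comm]
        exact natCast_mul_mem _ this
    · rw [← mul_assoc]
      refine ih _ fun l' h1 h2 h3 => ?_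
      have := h ((p, q) :: l') (by simp [h1]) (by simp only [traceDeg_cons]; omega)
        (by simp only [degB, List.map_cons, List.sum_cons] at h3 ⊢; omega)
      rwa [traceProd_cons, ← mul_assoc] at this

theorem traceProd_mem_traceFil_self (l : List (ℕ × ℕ)) :
    traceProd n l ∈ traceFil n l.length (traceDeg l) :=
  traceProd_mem_traceFil (Or.inr ⟨rfl, le_rfl⟩)

/-- The bracket of `tr A^(j+2)` with a product of `m` traces, up to products with at most `m`
factors. -/
theorem pbracket_trA_traceProd (hn : 1 ≤ n) (j : ℕ) (l : List (ℕ × ℕ)) :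
    pbracket (trAB n (j + 2) 0) (traceProd n l)
      + C ((n : ℂ)⁻¹) * ((j + 2 : ℕ) : PolyFun n) * trAB n (j + 1) 0 * shiftB n l
      ∈ traceFil n l.length (traceDeg l + j) := by
  induction l with
  | nil =>
    rw [shiftB, mul_zero, traceProd_nil, ← C_1, pbracket_C_right, add_zero]
    exact zero_mem _
  | cons x l ih =>
    obtain ⟨p, q⟩ := x
    have h1 := traceFil_mul (trAB_mem_traceFil (n := n) p q) ih
    have h3 : ((j + 2 : ℕ) : PolyFun n) * ((q : PolyFun n) * trAB n (p + j + 1) (q - 1)) ∈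
        traceFil n 1 (p + q + j) := by
      rcases q with _ | q
      · rw [Nat.cast_zero, zero_mul, mul_zero]
        exact zero_mem _
      · refine natCast_mul_mem _ (natCast_mul_mem _ ?_)
        have := trAB_mem_traceFil (n := n) (p + j + 1) q
        rwa [show p + j + 1 + q = p + (q + 1) + j by omega] at this
    have h4 := add_mem (traceFil_mono (m' := 1) (Or.inr ⟨rfl, zero_le_one⟩)
      (pbracket_trA_trAB hn j p q)) h3
    rw [sub_add_cancel] at h4
    have h5 := traceFil_mul h4 (traceProd_mem_traceFil_self (n := n) l)
    rw [List.length_cons, traceDeg_cons, add_comm l.length 1, traceProd_cons, pbracket_mul_right,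
      shiftB]
    rw [show p + q + (traceDeg l + j) = p + q + traceDeg l + j by omega] at h1
    rw [show p + q + j + traceDeg l = p + q + traceDeg l + j by omega] at h5
    convert add_mem h1 h5 using 1
    ring

/-- The bracket with `tr B²` preserves the degree and does not increase the number of factors. -/
theorem pbracket_trB_sq_traceProd (hn : 1 ≤ n) (l : List (ℕ × ℕ)) :
    pbracket (trAB n 0 2) (traceProd n l) ∈ traceFil n l.length (traceDeg l) := by
  induction l with
  | nil =>
    rw [traceProd_nil, ← C_1, pbracket_C_right]
    exact zero_mem _
  | cons x l ih =>
    obtain ⟨p, q⟩ := x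
    have h1 := traceFil_mul (trAB_mem_traceFil (n := n) p q) ih
    have h3 : 2 * ((p : PolyFun n) * trAB n (p - 1) (q + 1)) ∈ traceFil n 1 (p + q) := by
      rcases p with _ | p
      · rw [Nat.cast_zero, zero_mul, mul_zero]
        exact zero_mem _
      · refine natCast_mul_mem 2 (natCast_mul_mem _ ?_)
        have := trAB_mem_traceFil (n := n) p (q + 1)
        rwa [show p + (q + 1) = p + 1 + q by omega] at this
    have h4 := sub_mem (traceFil_mono (m' := 1) (Or.inr ⟨rfl, zero_le_one⟩)
      (pbracket_trB_sq_trAB hn p q)) h3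
    rw [add_sub_cancel_right] at h4
    have h5 := traceFil_mul h4 (traceProd_mem_traceFil_self (n := n) l)
    rw [List.length_cons, traceDeg_cons, add_comm l.length 1, traceProd_cons, pbracket_mul_right]
    convert add_mem h1 h5 using 1
    ring

end BracketFormulas

/-! ### Products of traces and the generated Lie algebra -/

section Generation

variable {n : ℕ}

/-- The functions which agree, modulo the ideal of minors and up to a constant, with an element of
the Lie algebra generated by `ℱ`. -/
noncomputable def lieMod (n : ℕ) : Submodule ℂ (PolyFun n) where
  carrier := {F | ∃ g c, LieGen n (calF n) g ∧ F - (g + C c) ∈ minorIdeal n}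
  zero_mem' := ⟨0, 0, .zero, by simp⟩
  add_mem' := by
    rintro F G ⟨f, c, hf, hF⟩ ⟨g, d, hg, hG⟩
    refine ⟨f + g, c + d, hf.add hg, ?_⟩
    convert add_mem hF hG using 1
    rw [C_add]
    ring
  smul_mem' := by
    rintro a F ⟨f, c, hf, hF⟩
    refine ⟨a • f, a * c, hf.smul a, ?_⟩
    convert Ideal.mul_mem_left _ (C a) hF using 1
    rw [C_mul, ← C_mul', ← C_mul']
    ring

theorem LieGen.mem_lieMod {g : PolyFun n} (hg : LieGen n (calF n) g) : g ∈ lieMod n :=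
  ⟨g, 0, hg, by simp⟩

theorem C_mem_lieMod (c : ℂ) : C c ∈ lieMod n := ⟨0, c, .zero, by simp⟩

theorem minorIdeal_mem_lieMod {F : PolyFun n} (hF : F ∈ minorIdeal n) : F ∈ lieMod n :=
  ⟨0, 0, .zero, by simpa using hF⟩

theorem pbracket_mem_lieMod (hn : 1 ≤ n) {h F : PolyFun n} (hinv : MomentInvariant h)
    (hh : h ∈ lieMod n) (hF : F ∈ lieMod n) : pbracket h F ∈ lieMod n := by
  obtain ⟨g, c, hg, hJ⟩ := hh
  obtain ⟨f, d, hf, hK⟩ := hF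
  refine ⟨pbracket g f, 0, hg.bracket hf, ?_⟩
  have h1 := hinv.pbracket_mem hK
  have h2 := (hf.momentInvariant hn).pbracket_mem hJ
  rw [pbracket_sub_right, pbracket_add_right, pbracket_C_right] at h1 h2
  convert sub_mem h1 h2 using 1
  rw [pbracket_antisymm f h, pbracket_antisymm f g, C_0]
  ring

theorem momentInvariant_trAB_zero_right (hn : 1 ≤ n) (k : ℕ) : MomentInvariant (trAB n k 0) := by
  rw [trAB_zero_right]
  exact momentInvariant_trace_Amat_pow hn k

theorem momentInvariant_trAB_zero_two (hn : 1 ≤ n) : MomentInvariant (trAB n 0 2) := by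
  rw [trAB_zero_left]
  exact momentInvariant_trace_Bmat_sq hn

theorem momentInvariant_trAB_one_one (hn : 1 ≤ n) : MomentInvariant (trAB n 1 1) := by
  simpa [trAB] using momentInvariant_trace_Amat_mul_Bmat hn

theorem trAB_two_zero_mem : trAB n 2 0 ∈ lieMod n := (LieGen.base (by simp [calF])).mem_lieMod

theorem trAB_zero_two_mem : trAB n 0 2 ∈ lieMod n := (LieGen.base (by simp [calF])).mem_lieMod

theorem trAB_three_zero_mem : trAB n 3 0 ∈ lieMod n := (LieGen.base (by simp [calF])).mem_lieMod

theorem mem_of_natCast_mul_mem {S : Submodule ℂ (PolyFun n)} {k : ℕ} (hk : k ≠ 0) {F : PolyFun n}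
    (h : (k : PolyFun n) * F ∈ S) : F ∈ S := by
  rw [← map_natCast C k] at h
  exact mem_of_C_mul_mem (Nat.cast_ne_zero.mpr hk) h

theorem trAB_one_one_mul_trAB_two_zero_mem (hn : 1 ≤ n) :
    trAB n 1 1 * trAB n 2 0 ∈ lieMod n := by
  have hsq : (trAB n 1 1) ^ 2 ∈ lieMod n := (LieGen.base (by simp [calF])).mem_lieMod
  have hinv := (momentInvariant_trAB_one_one hn).mul (momentInvariant_trAB_one_one hn)
  rw [sq] at hsq
  have h := pbracket_mem_lieMod hn hinv hsq trAB_two_zero_mem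
  rw [pbracket_mul_left, pbracket_trAB_one_one_trA hn] at h
  refine mem_of_natCast_mul_mem (k := 4) (by omega) ?_
  convert neg_mem h using 1
  push_cast
  ring

theorem trAB_two_zero_mul_trA_mem (hn : 1 ≤ n) {k : ℕ} (hk : k ≠ 0) (h : trAB n k 0 ∈ lieMod n) :
    trAB n 2 0 * trAB n k 0 ∈ lieMod n := by
  have hinv := (momentInvariant_trAB_one_one hn).mul (momentInvariant_trAB_zero_right hn 2)
  have h' := pbracket_mem_lieMod hn hinv (trAB_one_one_mul_trAB_two_zero_mem hn) h
  rw [pbracket_mul_left, pbracket_trAB_one_one_trA hn, pbracket_trA_trA] at h'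
  refine mem_of_natCast_mul_mem hk ?_
  convert neg_mem h' using 1
  ring

theorem trAB_mem_of_lt {d : ℕ} (hd : ∀ l, traceDeg l < d → traceProd n l ∈ lieMod n)
    {p q : ℕ} (h : p + q < d) : trAB n p q ∈ lieMod n := by
  have := hd [(p, q)] (by simpa [traceDeg] using h)
  simpa [traceProd] using this

theorem traceFil_zero_le {d : ℕ} (hd : ∀ l, traceDeg l < d → traceProd n l ∈ lieMod n) :
    traceFil n 0 d ≤ lieMod n := by
  refine traceFil_le (fun l hl => ?_) fun F hF => minorIdeal_mem_lieMod hF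
  rcases hl with hl | ⟨-, hl⟩
  · exact hd l hl
  · rw [List.length_eq_zero_iff.mp (Nat.le_zero.mp hl), traceProd_nil, ← C_1]
    exact C_mem_lieMod 1

theorem trA_mem_lieMod (hn : 1 ≤ n) {d : ℕ}
    (hd : ∀ l, traceDeg l < d → traceProd n l ∈ lieMod n)
    (h2 : 2 ≤ d) : trAB n d 0 ∈ lieMod n := by
  obtain rfl | rfl | ⟨e, rfl, he⟩ : d = 2 ∨ d = 3 ∨ ∃ e, d = e + 2 ∧ 2 ≤ e := by
    have : d = 2 ∨ d = 3 ∨ 4 ≤ d := by omega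
    refine this.imp_right (Or.imp_right fun h => ⟨d - 2, by omega, by omega⟩)
  · exact trAB_two_zero_mem
  · exact trAB_three_zero_mem
  have h20 := trAB_two_zero_mul_trA_mem hn (by omega : e ≠ 0) (trAB_mem_of_lt hd (by omega))
  have hbr := pbracket_mem_lieMod hn (momentInvariant_trAB_zero_right hn 3) trAB_three_zero_mem
    (trAB_mem_of_lt hd (by omega : e + 1 < e + 2))
  have hfil := traceFil_zero_le hd (pbracket_trA_trAB hn 1 e 1)
  refine mem_of_natCast_mul_mem (k := 3) (by omega) ?_
  convert sub_mem (add_mem hbr (C_mul_mem ((n : ℂ)⁻¹) (natCast_mul_mem 3 h20))) hfil using 1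
  push_cast
  ring

theorem trA_mul_trAB_mul_traceProd_mem (hn : 1 ≤ n) {d : ℕ}
    (hd : ∀ l, traceDeg l < d → traceProd n l ∈ lieMod n)
    {m : ℕ} (hlow : traceFil n m d ≤ lieMod n) {a r s : ℕ} {l : List (ℕ × ℕ)} (ha : 2 ≤ a)
    (hrs : 2 ≤ r + s) (hl : l.length + 1 = m) (hdeg : a + (r + s) + traceDeg l = d) :
    trAB n a 0 * (trAB n r s * traceProd n l) ∈ lieMod n := by
  induction hN : degB l using Nat.strong_induction_on generalizing s l with
  | _ N ih =>
  obtain ⟨j, rfl⟩ : ∃ j, a = j + 1 := ⟨a - 1, by omega⟩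
  have hbr := pbracket_mem_lieMod hn (momentInvariant_trAB_zero_right hn (j + 2))
    (trAB_mem_of_lt hd (by omega)) (hd ((r, s + 1) :: l) (by rw [traceDeg_cons]; omega))
  have hfil := pbracket_trA_traceProd hn j ((r, s + 1) :: l)
  rw [List.length_cons, hl, traceDeg_cons, show r + (s + 1) + traceDeg l + j = d by omega] at hfil
  have hshift : trAB n (j + 1) 0 * trAB n r (s + 1) * shiftB n l ∈ lieMod n := by
    refine mul_shiftB_mem l _ fun l' h1 h2 h3 => ?_
    rw [mul_assoc]
    exact ih (degB l') (by omega) (by omega) (by omega) (by omega) rfl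
  have hC : C ((n : ℂ)⁻¹ * ((j + 2 : ℕ) : ℂ) * ((s + 1 : ℕ) : ℂ)) *
      (trAB n (j + 1) 0 * (trAB n r s * traceProd n l)) ∈ lieMod n := by
    convert sub_mem (sub_mem (hlow hfil) hbr)
      (C_mul_mem ((n : ℂ)⁻¹) (natCast_mul_mem (j + 2) hshift)) using 1
    rw [shiftB, Nat.add_sub_cancel, C_mul, C_mul, map_natCast, map_natCast]
    ring
  refine mem_of_C_mul_mem (mul_ne_zero (mul_ne_zero (inv_ne_zero ?_) ?_) ?_) hC <;>
    exact Nat.cast_ne_zero.mpr (by omega)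

theorem trA_mul_traceProd_mem (hn : 1 ≤ n) {d : ℕ}
    (hd : ∀ l, traceDeg l < d → traceProd n l ∈ lieMod n)
    {m : ℕ} (hlow : traceFil n m d ≤ lieMod n) {a : ℕ} {l : List (ℕ × ℕ)} (ha : 2 ≤ a)
    (hl : l.length = m) (hdeg : a + traceDeg l = d) :
    trAB n a 0 * traceProd n l ∈ lieMod n := by
  rcases l with _ | ⟨⟨r, s⟩, l⟩
  · rw [traceProd_nil, mul_one]
    rw [traceDeg_nil, add_zero] at hdeg
    subst hdeg
    exact trA_mem_lieMod hn hd ha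
  rw [traceProd_cons]
  rw [traceDeg_cons] at hdeg
  rw [List.length_cons] at hl
  rcases Nat.lt_or_ge (r + s) 2 with hrs | hrs
  · obtain hrs | hrs : r + s = 1 ∨ r + s = 0 := by omega
    · rw [trAB_eq_zero hn hrs, zero_mul, mul_zero]
      exact zero_mem _
    · obtain ⟨rfl, rfl⟩ : r = 0 ∧ s = 0 := by omega
      rw [trAB_zero_zero, mul_left_comm, ← traceProd_cons]
      refine natCast_mul_mem _ (hlow (traceProd_mem_traceFil (Or.inr ?_)))
      rw [traceDeg_cons, List.length_cons]
      omega
  · exact trA_mul_trAB_mul_traceProd_mem hn hd hlow ha hrs hl (by omega)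

theorem trAB_mul_traceProd_mem (hn : 1 ≤ n) {d : ℕ}
    (hd : ∀ l, traceDeg l < d → traceProd n l ∈ lieMod n)
    {m : ℕ} (hlow : traceFil n m d ≤ lieMod n) {p q : ℕ} (h2 : 2 ≤ p + q)
    {l : List (ℕ × ℕ)} (hl : l.length = m) (hdeg : p + q + traceDeg l = d) :
    trAB n p q * traceProd n l ∈ lieMod n := by
  induction q generalizing p l with
  | zero => exact trA_mul_traceProd_mem hn hd hlow h2 hl (by omega)
  | succ q ih =>
    have hF := pbracket_mem_lieMod hn (momentInvariant_trAB_zero_two hn) trAB_zero_two_mem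
      (ih (p := p + 1) (by omega) hl (by omega))
    have hle : traceFil n m (traceDeg l) ≤
        (lieMod n).comap (LinearMap.mulLeft ℂ (trAB n (p + 1) q)) := by
      refine traceFil_le (fun l' hl' => ?_) fun F hF =>
        minorIdeal_mem_lieMod (Ideal.mul_mem_left _ _ hF)
      rw [Submodule.mem_comap, LinearMap.mulLeft_apply]
      rcases hl' with h | ⟨h, h'⟩
      · rw [← traceProd_cons]
        exact hd _ (by rw [traceDeg_cons]; omega)
      · rcases h'.lt_or_eq with h' | h'
        · rw [← traceProd_cons]
          refine hlow (traceProd_mem_traceFil (Or.inr ?_))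
          rw [traceDeg_cons, List.length_cons]
          omega
        · exact ih (by omega) h' (by omega)
    have hfil := pbracket_trB_sq_traceProd hn l
    rw [hl] at hfil
    have h1 := hle hfil
    rw [Submodule.mem_comap, LinearMap.mulLeft_apply] at h1
    have h3 := traceFil_mul (pbracket_trB_sq_trAB hn (p + 1) q) (traceProd_mem_traceFil_self l)
    rw [hl, zero_add, show p + 1 + q + traceDeg l = d by omega] at h3
    refine mem_of_natCast_mul_mem (k := 2 * (p + 1)) (by omega) ?_
    rw [pbracket_mul_right] at hF
    convert sub_mem (add_mem (hlow h3) h1) hF using 1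
    rw [Nat.add_sub_cancel]
    push_cast
    ring

/-- Modulo constants and the ideal of minors, all products of traces lie in the Lie algebra
generated by `ℱ`. -/
theorem traceProd_mem_lieMod (hn : 1 ≤ n) (l : List (ℕ × ℕ)) : traceProd n l ∈ lieMod n := by
  induction hdeg : traceDeg l using Nat.strong_induction_on generalizing l with
  | _ d hd =>
  replace hd : ∀ l, traceDeg l < d → traceProd n l ∈ lieMod n := fun l h => hd _ h l rfl
  suffices H : ∀ m, traceFil n m d ≤ lieMod n from
    H l.length (hdeg ▸ traceProd_mem_traceFil_self l)
  intro m
  induction m with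
  | zero => exact traceFil_zero_le hd
  | succ m hlow =>
    refine traceFil_le (fun l hl => ?_) fun F hF => minorIdeal_mem_lieMod hF
    rcases hl with hl | ⟨hl, hm⟩
    · exact hd l hl
    rcases hm.lt_or_eq with hm | hm
    · exact hlow (traceProd_mem_traceFil (Or.inr ⟨hl, by omega⟩))
    obtain ⟨⟨p, q⟩, l, rfl⟩ := List.exists_cons_of_length_eq_add_one hm
    rw [traceDeg_cons] at hl
    rw [List.length_cons] at hm
    rw [traceProd_cons]
    rcases Nat.lt_or_ge (p + q) 2 with hpq | hpq
    · obtain hpq | hpq : p + q = 1 ∨ p + q = 0 := by omega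
      · rw [trAB_eq_zero hn hpq, zero_mul]
        exact zero_mem _
      · obtain ⟨rfl, rfl⟩ : p = 0 ∧ q = 0 := by omega
        rw [trAB_zero_zero]
        exact natCast_mul_mem _ (hlow (traceProd_mem_traceFil (Or.inr ⟨by omega, by omega⟩)))
    · exact trAB_mul_traceProd_mem hn hd hlow hpq (by omega) hl

theorem traceProd_map_range (m : ℕ) (p q : ℕ → ℕ) :
    traceProd n ((List.range m).map fun k => (p k, q k)) =
      ∏ k ∈ Finset.range m, trAB n (p k) (q k) := by
  rw [traceProd, List.map_map, ← List.prod_toFinset _ List.nodup_range, List.toFinset_range]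
  rfl

end Generation

/-- induction step `H(D) → H(D+4)`. -/
theorem stmt_11 (n : ℕ) (hn : 1 ≤ n) (D : ℕ)
    (H : ∀ m : ℕ, 1 ≤ m → ∀ p q : ℕ → ℕ,
      (∑ k ∈ Finset.range m, (p k + q k)) ≤ D →
      ∃ g : PolyFun n, LieGen n (calF n) g ∧
        ∀ P ∈ Shat n,
          evalP P.1 P.2 (∏ k ∈ Finset.range m, trAB n (p k) (q k)) = evalP P.1 P.2 g)
    (m : ℕ) (hm : 1 ≤ m) (p q : ℕ → ℕ)
    (hdeg : (∑ k ∈ Finset.range m, (p k + q k)) ≤ D + 4) :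
    ∃ g : PolyFun n, LieGen n (calF n) g ∧
      ∀ P ∈ Shat n,
        evalP P.1 P.2 (∏ k ∈ Finset.range m, trAB n (p k) (q k)) = evalP P.1 P.2 g := by
  obtain ⟨g, c, hg, hc⟩ := traceProd_mem_lieMod hn ((List.range m).map fun k => (p k, q k))
  obtain ⟨g₀, hg₀, h0⟩ := H 1 le_rfl (fun _ => 0) (fun _ => 0) (by simp)
  refine ⟨g + (c * (n : ℂ)⁻¹) • g₀, hg.add (hg₀.smul _), fun P hP => ?_⟩
  have h1 := minorIdeal_evalP hc hP
  have h2 := h0 P hP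
  have hn0 : (n : ℂ) ≠ 0 := Nat.cast_ne_zero.mpr (by omega)
  rw [traceProd_map_range] at h1
  rw [Finset.prod_range_one, trAB_zero_zero] at h2
  simp only [evalP, map_sub, map_add, eval_C, map_natCast, smul_eval] at h1 h2 ⊢
  rw [← h2, inv_mul_cancel_right₀ hn0]
  exact sub_eq_zero.mp h1
end
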